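/- arXiv:2309.08518 — 2 statements merged into one kernel-verified Lean document; each statement's English description precedes it below -/
import Mathlib

section
/- For a sentence I of size n, the colored fundamental function expands into the colored dual immaculate basis as F_I = Σ_K L^{-1}_{I,K} 𝔖*_K, where the sum runs over all sentences K reachable from I in the colored immaculate descent graph 𝔇_A^n, and L^{-1}_{I,K} = Σ_𝒫 (−1)^{ℓ(𝒫)} prod(𝒫), the sum running over all directed paths 𝒫 from I to K in 𝔇_A^n. -/
open scoped BigOperators

namespace ColoredImm

variable {A : Type*}

/-- A *weak sentence* over the alphabet `A`: a finite list of words (words may be empty). -/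
abbrev Sentence (A : Type*) := List (List A)

/-- A genuine *sentence*: all of its words are nonempty. -/
def IsSentence (I : Sentence A) : Prop := ∀ w ∈ I, w ≠ []

/-- The size `|I|` of a sentence: its total number of letters. -/
def size (I : Sentence A) : ℕ := (I.map List.length).sum

/-- The word lengths `wℓ(I)` of a sentence. -/
def wl (I : Sentence A) : List ℕ := I.map List.length

/-- The flattening of a weak sentence: delete all empty words. -/
def flattenWS (I : Sentence A) : Sentence A := I.filter (fun w => !w.isEmpty)

/-- `Refines J I` means `J ⪯ I`: the sentence `I` can be obtained by concatenating
some adjacent words of `J` (so `J` is a refinement of `I`, and `I` a coarsening of `J`). -/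
def Refines (J I : Sentence A) : Prop :=
  ∃ P : List (Sentence A), (∀ p ∈ P, p ≠ []) ∧ P.flatten = J ∧ P.map List.flatten = I

/-! ### Fillings and colored immaculate tableaux -/

/-- An integer filling of a diagram, recorded row by row. -/
abbrev Filling := List (List ℕ)

/-- The entry of a filling at box `b = (row, column)` (0-indexed), with default `0`. -/
def entryAt (f : Filling) (b : ℕ × ℕ) : ℕ := (f.getD b.1 []).getD b.2 0

/-- `IsCIT I f`: `f` is a colored immaculate tableau of shape `I`; that is, `f` has the
same shape as the colored composition diagram of `I`, its entries are positive integers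
weakly increasing left to right along each row, and the entries in the first column are
strictly increasing from top to bottom. -/
def IsCIT (I : Sentence A) (f : Filling) : Prop :=
  f.map List.length = I.map List.length ∧
  (∀ row ∈ f, row.Chain' (· ≤ ·)) ∧
  (f.filterMap List.head?).Chain' (· < ·) ∧
  (∀ x ∈ f.flatten, 1 ≤ x)

/-- The colors (letters of `w`) of the boxes of one row whose entry (in `row`) is `v`,
read from left to right. -/
def rowWith (w : List A) (row : List ℕ) (v : ℕ) : List A :=
  ((w.zip row).filter (fun p => p.2 == v)).map Prod.fst

/-- The word of the type of a tableau at value `v`: the colors of all boxes with entry `v`,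
read left to right, from the bottom row up to the top row. -/
def typeWord (I : Sentence A) (f : Filling) (v : ℕ) : List A :=
  (((I.zip f).reverse).map (fun p => rowWith p.1 p.2 v)).flatten

/-- `HasType I f B` : the tableau `f` (of shape `I`) has type the weak sentence `B`,
i.e. for every positive integer `v`, the colors of the boxes of `f` containing `v`
(read left to right, bottom to top) form the `v`-th word of `B`. -/
def HasType (I : Sentence A) (f : Filling) (B : Sentence A) : Prop :=
  ∀ v, 1 ≤ v → typeWord I f v = B.getD (v - 1) []

/-- `K_{J,B}`: the number of colored immaculate tableaux of shape `J` and type `B`. -/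
noncomputable def KJB (J B : Sentence A) : ℕ :=
  Set.ncard {f : Filling | IsCIT J f ∧ HasType J f B}

/-! ### Standardization -/

/-- The list of boxes of a filling. -/
def boxes (f : Filling) : List (ℕ × ℕ) :=
  ((List.range f.length).map
    (fun r => (List.range (f.getD r []).length).map (fun j => (r, j)))).flatten

/-- `beforeB f b b'`: box `b` comes strictly before box `b'` in the type-reading order of `f`
(smaller entries first; among equal entries, lower rows first, and within a row left to right). -/
def beforeB (f : Filling) (b b' : ℕ × ℕ) : Bool :=
  entryAt f b < entryAt f b' ||
    (entryAt f b == entryAt f b' && (b'.1 < b.1 || (b.1 == b'.1 && b.2 < b'.2)))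

/-- The standardization of a filling: each box is renumbered (starting from `1`)
according to its position in the type-reading order. -/
def stdFill (f : Filling) : Filling :=
  (List.range f.length).map (fun r =>
    (List.range (f.getD r []).length).map (fun j =>
      1 + ((boxes f).filter (fun b' => beforeB f b' (r, j))).length))

/-- The number of boxes of a filling. -/
def nBoxes (f : Filling) : ℕ := f.flatten.length

/-- A filling of `n` boxes is standard when its entries are exactly `1, …, n`,
each appearing once. -/
def IsStandardF (f : Filling) : Prop := f.flatten.Perm (List.range' 1 (nBoxes f))

/-! ### Descents and the colored descent composition -/

/-- The (0-indexed) row containing the value `v` in a standard filling. -/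
def rowOf (f : Filling) (v : ℕ) : ℕ := f.findIdx (fun row => row.contains v)

/-- The sorted list of descents of a standard filling: those `i` with `1 ≤ i ≤ n-1`
such that `i+1` lies in a strictly lower row than `i`. -/
def descList (f : Filling) : List ℕ :=
  (List.range' 1 (nBoxes f - 1)).filter (fun i => decide (rowOf f i < rowOf f (i + 1)))

/-- The composition of `n` associated to a set of split positions `d_1 < … < d_k`:
`(d_1, d_2 - d_1, …, n - d_k)`. -/
def compOf (ds : List ℕ) (n : ℕ) : List ℕ :=
  List.zipWith (fun a b => b - a) (0 :: ds) (ds ++ [n])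

/-- Split a word into a sentence according to a composition. -/
def splitByComp : List A → List ℕ → List (List A)
  | _, [] => []
  | w, a :: rest => w.take a :: splitByComp (w.drop a) rest

/-- The color of the box containing the value `v` in a standard filling of shape `I`. -/
def colorOf [Inhabited A] (I : Sentence A) (f : Filling) (v : ℕ) : A :=
  (I.getD (rowOf f v) []).getD ((f.getD (rowOf f v) []).findIdx (fun x => x == v)) default

/-- The maximal word of the colored descent composition of a standard filling of shape `I`:
the colors of its boxes read in the order of their integer entries. -/
def readWord [Inhabited A] (I : Sentence A) (f : Filling) : List A :=
  (List.range (nBoxes f)).map (fun i => colorOf I f (i + 1))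

/-- The colored descent composition `co_A(U)` of a standard colored immaculate tableau:
read the colors of the boxes in the order of their entries, starting a new word
immediately after each descent. -/
def coA [Inhabited A] (I : Sentence A) (f : Filling) : Sentence A :=
  if nBoxes f = 0 then [] else splitByComp (readWord I f) (compOf (descList f) (nBoxes f))

/-- `L_{J,C}`: the number of standard colored immaculate tableaux of shape `J`
with colored descent composition `C`. -/
noncomputable def LJC [Inhabited A] (J C : Sentence A) : ℕ :=
  Set.ncard {f : Filling | IsCIT J f ∧ IsStandardF f ∧ coA J f = C}

/-! ### The colored quasisymmetric functions `QSym_A` -/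

/-- A (normal form of a) monomial in the partially commutative variables `x_{a,i}`:
a pair consisting of the list of words `(w_1, …, w_m)` and the list of (strictly
increasing, positive) second indices `(j_1 < … < j_m)`, representing
`x_{w_1,j_1} ⋯ x_{w_m,j_m}`. -/
abbrev Mono (A : Type*) := List (List A) × List ℕ

/-- A colored quasisymmetric "series": a formal linear combination of monomials,
recorded by its coefficient function.  `QSym_A` itself is the span of the colored
monomial functions `MQ I` inside this space. -/
abbrev QSymA (A : Type*) := Mono A → ℚ

/-- Validity of a monomial normal form: words and indices match up, the indices are
strictly increasing positive integers, and all words are nonempty. -/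
def ValidMono (m : Mono A) : Prop :=
  m.1.length = m.2.length ∧ m.2.Chain' (· < ·) ∧ (∀ j ∈ m.2, 1 ≤ j) ∧ ∀ w ∈ m.1, w ≠ []

open Classical in
/-- The colored monomial quasisymmetric function `M_I`: the sum of all monomials
`x_{w_1,j_1} ⋯ x_{w_m,j_m}` with `j_1 < … < j_m`, where `I = (w_1, …, w_m)`. -/
noncomputable def MQ (I : Sentence A) : QSymA A := fun m =>
  if m.1 = I ∧ ValidMono m then 1 else 0

/-- The largest entry of a filling. -/
def maxEntry (f : Filling) : ℕ := f.flatten.foldr max 0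

/-- The monomial `x_T` of a colored immaculate tableau `T = f` of shape `I`:
for `T` of type `B = (u_1, …, u_j)` it is `x_{u_1,1} x_{u_2,2} ⋯ x_{u_j,j}`
(empty words are skipped). -/
def monoOf (I : Sentence A) (f : Filling) : Mono A :=
  let vs := ((List.range (maxEntry f)).map (· + 1)).filter (fun v => !(typeWord I f v).isEmpty)
  (vs.map (typeWord I f), vs)

/-- The colored dual immaculate function `𝔖*_J = Σ_T x_T`, the sum of the monomials of all
colored immaculate tableaux `T` of shape `J` (its coefficient at a monomial `m` is the
number of such tableaux with `x_T = m`). -/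
noncomputable def dualImm (J : Sentence A) : QSymA A := fun m =>
  (Set.ncard {f : Filling | IsCIT J f ∧ monoOf J f = m} : ℚ)

/-- The colored fundamental quasisymmetric function `F_I = Σ_{J ⪯ I} M_J`. -/
noncomputable def FQ (I : Sentence A) : QSymA A :=
  ∑ᶠ J ∈ {J : Sentence A | Refines J I}, MQ J

/-! ### The colored immaculate descent graph -/

/-- Edges of the colored immaculate descent graph: a directed edge from `I` to `J` (`J ≠ I`)
whenever some standard colored immaculate tableau of shape `I` has colored descent
composition `J`. -/
def IsEdge [Inhabited A] (I J : Sentence A) : Prop := J ≠ I ∧ LJC I J ≠ 0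

/-- Directed paths from `I` to `K` in the colored immaculate descent graph, recorded by
their (nonempty) lists of successive vertices; the path `[I]` is the empty path at `I`. -/
def PathsFromTo [Inhabited A] (I K : Sentence A) : Set (List (Sentence A)) :=
  {p | p.head? = some I ∧ p.getLast? = some K ∧ p.Chain' IsEdge}

/-- The signed weight `(-1)^{ℓ(𝒫)} prod(𝒫)` of a directed path `𝒫`:
`ℓ(𝒫)` is its number of edges and `prod(𝒫)` the product of its edge weights `L_{I,J}`. -/
noncomputable def pathWeight [Inhabited A] (p : List (Sentence A)) : ℚ :=
  ((-1 : ℚ)) ^ (p.length - 1) * ((p.zip p.tail).map (fun e => (LJC e.1 e.2 : ℚ))).prod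

/-- `L⁻¹_{I,K} = Σ_𝒫 (-1)^{ℓ(𝒫)} prod(𝒫)`, summed over all directed paths `𝒫`
from `I` to `K` in the colored immaculate descent graph. -/
noncomputable def Linv [Inhabited A] (I K : Sentence A) : ℚ :=
  ∑ᶠ p ∈ PathsFromTo I K, pathWeight p

/-! ### The colored noncommutative symmetric functions `NSym_A` -/

/-- A formal series over the complete homogeneous basis `{H_I}` of `NSym_A`, recorded by its
coefficient function on (weak) sentences.  `NSym_A` itself consists of the finitely
supported elements supported on genuine sentences; see `InNSym`. -/
abbrev NSymA (A : Type*) := Sentence A → ℚ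

/-- Membership in `NSym_A` proper: finitely supported, and supported on genuine sentences. -/
def InNSym (f : NSymA A) : Prop :=
  (Function.support f).Finite ∧ ∀ I, f I ≠ 0 → IsSentence I

open Classical in
/-- The colored complete homogeneous noncommutative symmetric function
`H_I = H_{w_1} ⋯ H_{w_k}`. -/
noncomputable def Hd (I : Sentence A) : NSymA A := fun J => if J = I then 1 else 0

/-- `H_w` for a single word `w`, with `H_∅ = 1`. -/
noncomputable def Hw (w : List A) : NSymA A := if w.isEmpty then Hd [] else Hd [w]

/-- Multiplication in `NSym_A` (the concatenation product, extended to series):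
`H_I · H_J = H_{I ⬝ J}`. -/
def mulN (f g : NSymA A) : NSymA A := fun I =>
  ∑ j ∈ Finset.range (I.length + 1), f (I.take j) * g (I.drop j)

/-- The duality pairing `⟨·,·⟩ : NSym_A × QSym_A → ℚ`, determined by
`⟨H_I, M_J⟩ = δ_{I,J}`: the `M_I`-coefficient of a quasisymmetric function is its
coefficient on the monomial `x_{w_1,1} x_{w_2,2} ⋯ x_{w_k,k}`. -/
noncomputable def pairNQ (G : NSymA A) (F : QSymA A) : ℚ :=
  ∑ᶠ I ∈ {I : Sentence A | IsSentence I}, G I * F (I, List.range' 1 I.length)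

/-- All ways of splitting each word of a list of words into a prefix and a suffix. -/
def splitsOf : List (List A) → List (List (List A) × List (List A))
  | [] => [([], [])]
  | w :: ws =>
      (((splitsOf ws).map (fun p =>
        (List.range (w.length + 1)).map (fun t => (w.take t :: p.1, w.drop t :: p.2))))).flatten

/-- Restriction of a candidate monomial: keep only the nonempty words together with
their indices. -/
def restrictMono (ws : List (List A)) (js : List ℕ) : Mono A :=
  let ps := (ws.zip js).filter (fun p => !p.1.isEmpty)
  (ps.map Prod.fst, ps.map Prod.snd)

/-- The product of colored quasisymmetric series: the coefficient of a monomial in `F·G`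
is the sum, over all ways of writing each of its words as a concatenation of a word of a
monomial of `F` (on the left) and a word of a monomial of `G` (on the right), of the
products of the corresponding coefficients. -/
def mulQ (F G : QSymA A) : QSymA A := fun m =>
  ((splitsOf m.1).map (fun p => F (restrictMono p.1 m.2) * G (restrictMono p.2 m.2))).sum

/-- The right perp operator `M^⊸` of `M ∈ QSym_A`, the linear operator on `NSym_A`
determined by `⟨M^⊸(H), G⟩ = ⟨H, G·M⟩`; explicitly, for the dual bases `{M_I}` and `{H_I}`,
`M^⊸(H) = Σ_I ⟨H, M_I · M⟩ H_I`. -/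
noncomputable def rperp (M : QSymA A) (H : NSymA A) : NSymA A :=
  ∑ᶠ I ∈ {I : Sentence A | IsSentence I}, pairNQ H (mulQ (MQ I) M) • Hd I

/-- The colored noncommutative Bernstein operator
`𝔹_v = Σ_u Σ_{Q : w(Q^r) = u} (-1)^{ℓ(Q)} H_{v·u} · (Σ_{S ⪰ Q} M_S^⊸)`,
where `Q` runs over all sentences, `u = w(Q^r)` is the concatenation of the words of `Q`
in reverse order, and `S` runs over all coarsenings of `Q`. -/
noncomputable def Bern (v : List A) (f : NSymA A) : NSymA A :=
  ∑ᶠ Q ∈ {Q : Sentence A | IsSentence Q},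
    ((-1 : ℚ)) ^ Q.length •
      mulN (Hw (v ++ Q.reverse.flatten))
        (∑ᶠ S ∈ {S : Sentence A | Refines Q S}, rperp (MQ S) f)

/-- The colored immaculate function `𝔖_J = 𝔹_{v_1} 𝔹_{v_2} ⋯ 𝔹_{v_h}(1)`. -/
noncomputable def ImmS (J : Sentence A) : NSymA A := J.foldr Bern (Hd [])

/-- The colored ribbon function `R_I = Σ_{J ⪰ I} (-1)^{ℓ(J) - ℓ(I)} H_J`. -/
noncomputable def Rib (I : Sentence A) : NSymA A :=
  ∑ᶠ J ∈ {J : Sentence A | Refines I J}, ((-1 : ℚ)) ^ (I.length - J.length) • Hd J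

/-- The Pieri relation `J ⊂_w K` for a sentence `J = (v_1, …, v_h)` and a word `w`:
`K = (u_1, …, u_g)` with `h ≤ g ≤ h+1` (setting `v_{h+1} = ∅`) and `u_j = v_j · q_j`
for words `q_j` (possibly empty) whose reversed concatenation `q_g ⋯ q_1` equals `w`. -/
def PieriRel (J : Sentence A) (w : List A) (K : Sentence A) : Prop :=
  J.length ≤ K.length ∧ K.length ≤ J.length + 1 ∧
  ∃ q : List (List A), q.length = K.length ∧ q.reverse.flatten = w ∧
    ∀ j < K.length, K.getD j [] = J.getD j [] ++ q.getD j []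

/-- Right containment of a weak sentence `K` in `J`: same length, and each word of `K` is a
suffix of the corresponding word of `J`. -/
def RightContained (K J : Sentence A) : Prop :=
  K.length = J.length ∧ ∀ i < J.length, (K.getD i []).IsSuffix (J.getD i [])

/-- The weak sentence `J/_R K`: remove each word of `K` from the right end of the
corresponding word of `J`. -/
def rightQuot (J K : Sentence A) : Sentence A :=
  List.zipWith (fun v u => v.take (v.length - u.length)) J K

/-- Left containment `J ⊆_L I`: `ℓ(J) ≤ ℓ(I)` and each word of `J` is a prefix of the
corresponding word of `I`. -/
def LeftContained (J I : Sentence A) : Prop :=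
  J.length ≤ I.length ∧ ∀ i < J.length, (J.getD i []).IsPrefix (I.getD i [])

/-- A skew colored immaculate tableau of shape `I/J`: a filling of the active boxes
(the `i`-th row keeps the last `|w_i| - |v_i|` boxes) with positive integers, rows weakly
increasing left to right, and the entries in the (active part of the) first column of `I`
strictly increasing top to bottom. -/
def IsSkewCIT (I J : Sentence A) (f : Filling) : Prop :=
  f.map List.length =
    (List.range I.length).map (fun i => (I.getD i []).length - (J.getD i []).length) ∧
  (∀ row ∈ f, row.Chain' (· ≤ ·)) ∧
  ((List.range I.length).filterMap
    (fun i => if (J.getD i []).length = 0 then (f.getD i []).head? else none)).Chain' (· < ·) ∧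
  (∀ x ∈ f.flatten, 1 ≤ x)

/-- The word of the type of a skew tableau at value `v`: the colors of the active boxes with
entry `v`, read left to right, bottom to top. -/
def skewTypeWord (I J : Sentence A) (f : Filling) (v : ℕ) : List A :=
  (((List.range I.length).reverse).map (fun i =>
    rowWith ((I.getD i []).drop (J.getD i []).length) (f.getD i []) v)).flatten

/-- `SkewHasType I J f K` : the skew tableau `f` of shape `I/J` has type `K`. -/
def SkewHasType (I J : Sentence A) (f : Filling) (K : Sentence A) : Prop :=
  ∀ v, 1 ≤ v → skewTypeWord I J f v = K.getD (v - 1) []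

/-! ### The complement involution `ψ` and the row-strict functions -/

/-- The complement `I^c` of a sentence: the unique sentence with the same maximal word
that splits exactly where `I` does not. -/
def complSent (I : Sentence A) : Sentence A :=
  let w := I.flatten
  let n := w.length
  if n = 0 then []
  else
    let splits := (((wl I).scanl (· + ·) 0).drop 1).dropLast
    let csplits := (List.range' 1 (n - 1)).filter (fun i => !(splits.contains i))
    splitByComp w (compOf csplits n)

/-- The `M_I`-coefficient of a colored quasisymmetric function. -/
noncomputable def coeffM (G : QSymA A) (I : Sentence A) : ℚ := G (I, List.range' 1 I.length)

/-- The image of `M_I` under `ψ`, via `M_I = Σ_{J ⪯ I} (-1)^{ℓ(J)-ℓ(I)} F_J` and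
`ψ(F_J) = F_{J^c}`. -/
noncomputable def psiM (I : Sentence A) : QSymA A :=
  ∑ᶠ J ∈ {J : Sentence A | Refines J I}, ((-1 : ℚ)) ^ (J.length - I.length) • FQ (complSent J)

/-- The linear involution `ψ` of `QSym_A`, determined by `ψ(F_I) = F_{I^c}`. -/
noncomputable def psiQ (G : QSymA A) : QSymA A :=
  ∑ᶠ I ∈ {I : Sentence A | IsSentence I}, coeffM G I • psiM I

/-- A colored row-strict immaculate tableau of shape `I`: entries strictly increase left to
right along each row and weakly increase top to bottom down the first column. -/
def IsCRSIT (I : Sentence A) (f : Filling) : Prop :=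
  f.map List.length = I.map List.length ∧
  (∀ row ∈ f, row.Chain' (· < ·)) ∧
  (f.filterMap List.head?).Chain' (· ≤ ·) ∧
  (∀ x ∈ f.flatten, 1 ≤ x)

/-- The word of the type of a row-strict tableau at value `v`: the colors of the boxes with
entry `v`, read left to right, top to bottom. -/
def rsTypeWord (I : Sentence A) (f : Filling) (v : ℕ) : List A :=
  ((I.zip f).map (fun p => rowWith p.1 p.2 v)).flatten

/-- The monomial `x_T` of a colored row-strict immaculate tableau. -/
def rsMonoOf (I : Sentence A) (f : Filling) : Mono A :=
  let vs := ((List.range (maxEntry f)).map (· + 1)).filter (fun v => !(rsTypeWord I f v).isEmpty)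
  (vs.map (rsTypeWord I f), vs)

/-- The colored row-strict dual immaculate function `ℛ𝔖*_J = Σ_T x_T`, summed over all
colored row-strict immaculate tableaux `T` of shape `J`. -/
noncomputable def rsDualImm (J : Sentence A) : QSymA A := fun m =>
  (Set.ncard {f : Filling | IsCRSIT J f ∧ rsMonoOf J f = m} : ℚ)

/-- `α ⪰ β` in the reverse lexicographic order on compositions: at the first index where
they differ, `α` has the *smaller* entry (padding with zeros). -/
def RevLexGE (α β : List ℕ) : Prop :=
  α = β ∨ ∃ i, (∀ j < i, α.getD j 0 = β.getD j 0) ∧ α.getD i 0 < β.getD i 0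

/-! ### Uncolored (ordinary) versions, for `QSym` -/

namespace Uncolored

/-- A composition: a list of positive integers. -/
def IsComposition (α : List ℕ) : Prop := ∀ a ∈ α, 1 ≤ a

/-- `β ⪯ α`: the composition `α` is obtained by summing adjacent parts of `β`. -/
def RefinesC (β α : List ℕ) : Prop :=
  ∃ P : List (List ℕ), (∀ p ∈ P, p ≠ []) ∧ P.flatten = β ∧ P.map List.sum = α

/-- A monomial `x_{i_1}^{a_1} ⋯ x_{i_m}^{a_m}` recorded by its exponents and its
strictly increasing positive indices. -/
abbrev MonoU := List ℕ × List ℕ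

/-- A quasisymmetric "series", recorded by its coefficient function on monomials.
`QSym` is the span of the monomial functions `MU α` inside this space. -/
abbrev QSymU := MonoU → ℚ

/-- Validity of a monomial: matching lengths, strictly increasing positive indices,
positive exponents. -/
def ValidMonoU (m : MonoU) : Prop :=
  m.1.length = m.2.length ∧ m.2.Chain' (· < ·) ∧ (∀ j ∈ m.2, 1 ≤ j) ∧ ∀ a ∈ m.1, 1 ≤ a

open Classical in
/-- The monomial quasisymmetric function `M_α`. -/
noncomputable def MU (α : List ℕ) : QSymU := fun m =>
  if m.1 = α ∧ ValidMonoU m then 1 else 0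

/-- The fundamental quasisymmetric function `F_α = Σ_{β ⪯ α} M_β`. -/
noncomputable def FU (α : List ℕ) : QSymU :=
  ∑ᶠ β ∈ {β : List ℕ | RefinesC β α}, MU β

/-- An immaculate tableau of shape `α`: positive integer entries, rows weakly increasing
left to right, first column strictly increasing top to bottom. -/
def IsIT (α : List ℕ) (f : Filling) : Prop :=
  f.map List.length = α ∧
  (∀ row ∈ f, row.Chain' (· ≤ ·)) ∧
  (f.filterMap List.head?).Chain' (· < ·) ∧
  (∀ x ∈ f.flatten, 1 ≤ x)

/-- The number of boxes of `f` with entry `v`. -/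
def countOf (f : Filling) (v : ℕ) : ℕ := (f.flatten.filter (fun x => x == v)).length

/-- The monomial `x^T` of an immaculate tableau `T` of type `β`:
`x_1^{β_1} ⋯ x_h^{β_h}` (zero exponents skipped). -/
def monoOfU (f : Filling) : MonoU :=
  let vs := ((List.range (maxEntry f)).map (· + 1)).filter (fun v => decide (countOf f v ≠ 0))
  (vs.map (countOf f), vs)

/-- The dual immaculate function `𝔖*_α = Σ_T x^T`, summed over all immaculate tableaux
of shape `α`. -/
noncomputable def dualImmU (α : List ℕ) : QSymU := fun m =>
  (Set.ncard {f : Filling | IsIT α f ∧ monoOfU f = m} : ℚ)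

/-- The descent composition `co(U)` of a standard immaculate tableau. -/
def descComp (f : Filling) : List ℕ :=
  if nBoxes f = 0 then [] else compOf (descList f) (nBoxes f)

/-- `L_{α,β}`: the number of standard immaculate tableaux of shape `α` with descent
composition `β`. -/
noncomputable def LU (α β : List ℕ) : ℕ :=
  Set.ncard {f : Filling | IsIT α f ∧ IsStandardF f ∧ descComp f = β}

/-- Edges of the immaculate descent graph `𝔇^n`. -/
def IsEdgeU (α β : List ℕ) : Prop := β ≠ α ∧ LU α β ≠ 0

/-- Directed paths from `α` to `β` in the immaculate descent graph, recorded by their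
lists of successive vertices; `[α]` is the empty path at `α`. -/
def PathsU (α β : List ℕ) : Set (List (List ℕ)) :=
  {p | p.head? = some α ∧ p.getLast? = some β ∧ p.Chain' IsEdgeU}

/-- The signed weight `(-1)^{ℓ(𝒫)} prod(𝒫)` of a path. -/
noncomputable def pathWeightU (p : List (List ℕ)) : ℚ :=
  ((-1 : ℚ)) ^ (p.length - 1) * ((p.zip p.tail).map (fun e => (LU e.1 e.2 : ℚ))).prod

/-- `L⁻¹_{α,β} = Σ_𝒫 (-1)^{ℓ(𝒫)} prod(𝒫)`, over directed paths from `α` to `β` in `𝔇^n`. -/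
noncomputable def LinvU (α β : List ℕ) : ℚ :=
  ∑ᶠ p ∈ PathsU α β, pathWeightU p

end Uncolored

end ColoredImm

namespace ColoredImm
universe u
variable {A : Type u}

/-! ### Generic list lemmas -/

theorem filter_append_filter_not {α : Type*} (p : α → Bool) (l : List α)
    (h : l.Pairwise (fun a b => p b = true → p a = true)) :
    l = l.filter p ++ l.filter (fun x => !p x) := by
  induction l with
  | nil => simp
  | cons a l ih =>
    rw [List.pairwise_cons] at h
    have ih' := ih h.2
    by_cases ha : p a = true
    · simp only [List.filter_cons, ha, if_true, Bool.not_true, Bool.false_eq_true, if_false,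
        List.cons_append]
      rw [← ih']
    · have hn : l.filter p = [] := by
        rw [List.filter_eq_nil_iff]
        intro b hb hpb
        exact ha (h.1 b hb hpb)
      have hn' : l.filter (fun x => !p x) = l := by
        rw [List.filter_eq_self]
        intro b hb
        have := (List.filter_eq_nil_iff.1 hn) b hb
        simpa using this
      simp [List.filter_cons, ha, hn, hn']

/-- A list sorted by a key is the concatenation of its key-fibers. -/
theorem eq_flatten_fibers {α κ : Type*} [DecidableEq κ] (r : κ → κ → Prop) (key : α → κ) :
    ∀ (ks : List κ) (l : List α), (∀ k, ¬ r k k) → ks.Pairwise r →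
      l.Pairwise (fun a b => ¬ r (key b) (key a)) → (∀ a ∈ l, key a ∈ ks) →
      l = (ks.map (fun k => l.filter (fun a => decide (key a = k)))).flatten := by
  intro ks
  induction ks with
  | nil =>
    intro l _ _ _ h
    cases l with
    | nil => simp
    | cons a l => simpa using h a (by simp)
  | cons k0 ks ih =>
    intro l hirr hks hl hmem
    rw [List.pairwise_cons] at hks
    have hsplit := filter_append_filter_not (fun a => decide (key a = k0)) l (by
      refine List.Pairwise.imp_of_mem ?_ hl
      intro a b ha hb hab hkb
      simp only [decide_eq_true_eq] at hkb ⊢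
      by_contra hka
      rcases List.mem_cons.1 (hmem a ha) with h | h
      · exact hka h
      · exact hab (hkb ▸ hks.1 _ h))
    have hih := ih (l.filter (fun x => !decide (key x = k0))) hirr hks.2
      (hl.sublist List.filter_sublist) (by
        intro a ha
        rw [List.mem_filter] at ha
        rcases List.mem_cons.1 (hmem a ha.1) with h | h
        · simp [h] at ha
        · exact h)
    rw [List.map_cons, List.flatten_cons]
    conv_lhs => rw [hsplit]
    congr 1
    conv_lhs => rw [hih]
    congr 1
    apply List.map_congr_left
    intro k hk
    rw [List.filter_filter]
    apply List.filter_congr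
    intro a _
    have hne : k ≠ k0 := fun h => hirr k0 (h ▸ hks.1 k hk)
    by_cases hak : key a = k
    · simp [hak, hne]
    · simp [hak]

/-! ### Lists of (row, value) pairs -/

/-- The reading order on (row, value) pairs. -/
def RR (a b : ℕ × ℕ) : Prop := a.2 < b.2 ∨ (a.2 = b.2 ∧ b.1 ≤ a.1)

instance : DecidableRel RR := fun a b => by unfold RR; infer_instance

instance : IsTrans (ℕ × ℕ) RR := ⟨by
  rintro ⟨a, a'⟩ ⟨b, b'⟩ ⟨c, c'⟩; unfold RR; simp only; omega⟩

instance : Std.Total RR := ⟨by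
  rintro ⟨a, a'⟩ ⟨b, b'⟩; unfold RR; simp only; omega⟩

theorem RR_antisymm (a b : ℕ × ℕ) (h : RR a b) (h' : RR b a) : a = b := by
  unfold RR at *; ext <;> omega

/-- Row `k` of the list of (row, value) pairs. -/
def rowK (L : List (ℕ × ℕ)) (k : ℕ) : List ℕ := (L.filter (fun p => p.1 == k)).map Prod.snd

/-- The filling with `r` rows recorded by a list of (row, value) pairs. -/
def fill (r : ℕ) (L : List (ℕ × ℕ)) : Filling := (List.range r).map (rowK L)

/-- Pairs of a filling. -/
def prs : ℕ → Filling → List (ℕ × ℕ)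
  | _, [] => []
  | c, row :: f => row.map (fun v => (c, v)) ++ prs (c + 1) f

theorem prs_fst_ge (f : Filling) : ∀ c, ∀ p ∈ prs c f, c ≤ p.1 := by
  induction f with
  | nil => simp [prs]
  | cons row f ih =>
    intro c p hp
    simp only [prs, List.mem_append, List.mem_map] at hp
    rcases hp with ⟨v, _, rfl⟩ | hp
    · simp
    · have := ih _ p hp; omega

theorem prs_fst_lt (f : Filling) : ∀ c, ∀ p ∈ prs c f, p.1 < c + f.length := by
  induction f with
  | nil => simp [prs]
  | cons row f ih =>
    intro c p hp
    simp only [prs, List.mem_append, List.mem_map] at hp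
    rcases hp with ⟨v, _, rfl⟩ | hp
    · simp
    · have := ih _ p hp; simp only [List.length_cons]; omega

theorem rowK_append (L L' : List (ℕ × ℕ)) (k : ℕ) : rowK (L ++ L') k = rowK L k ++ rowK L' k := by
  simp [rowK]

theorem rowK_map_same (row : List ℕ) (c : ℕ) : rowK (row.map (fun v => (c, v))) c = row := by
  induction row with
  | nil => rfl
  | cons a row ih => simp [rowK] at ih ⊢; exact ih

theorem rowK_eq_nil (L : List (ℕ × ℕ)) (c : ℕ) (h : ∀ p ∈ L, p.1 ≠ c) : rowK L c = [] := by
  simp only [rowK, List.map_eq_nil_iff, List.filter_eq_nil_iff]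
  intro a ha; simpa using h a ha

theorem rowK_prs (f : Filling) : ∀ c j, rowK (prs c f) (c + j) = f.getD j [] := by
  induction f with
  | nil => simp [prs, rowK]
  | cons row f ih =>
    intro c j
    simp only [prs, rowK_append]
    cases j with
    | zero =>
      rw [Nat.add_zero, rowK_map_same, rowK_eq_nil]
      · simp
      · intro p hp; have := prs_fst_ge f _ p hp; omega
    | succ j =>
      rw [rowK_eq_nil (row.map _)]
      · have := ih (c+1) j
        rw [show c + (j+1) = c + 1 + j by omega, this]; simp
      · simp only [List.mem_map]; rintro p ⟨v, _, rfl⟩; simp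

theorem prs_map_snd (f : Filling) : ∀ c, (prs c f).map Prod.snd = f.flatten := by
  induction f with
  | nil => simp [prs]
  | cons row f ih => intro c; simp [prs, ih, Function.comp_def]

theorem count_rowK (L : List (ℕ × ℕ)) (k v : ℕ) : (rowK L k).count v = L.count (k, v) := by
  induction L with
  | nil => simp [rowK]
  | cons p L ih =>
    obtain ⟨a, b⟩ := p
    unfold rowK at *
    by_cases h : a = k
    · subst h; simp [List.count_cons, ih]
    · simp [List.count_cons, ih, h]

theorem perm_of_rowK {L L' : List (ℕ × ℕ)} (h : ∀ k, (rowK L k).Perm (rowK L' k)) : L.Perm L' := by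
  rw [List.perm_iff_count]
  rintro ⟨k, v⟩
  rw [← count_rowK, ← count_rowK, (h k).count_eq]

theorem fill_getD (r : ℕ) (L : List (ℕ × ℕ)) (hL : ∀ p ∈ L, p.1 < r) (k : ℕ) :
    (fill r L).getD k [] = rowK L k := by
  by_cases hk : k < r
  · simp [fill, hk]
  · rw [rowK_eq_nil]
    · simp [fill, hk]
    · intro p hp; have := hL p hp; omega

theorem prs_fill_perm (r : ℕ) (L : List (ℕ × ℕ)) (hL : ∀ p ∈ L, p.1 < r) :
    (prs 0 (fill r L)).Perm L := by
  apply perm_of_rowK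
  intro k
  have := rowK_prs (fill r L) 0 k
  rw [Nat.zero_add] at this
  rw [this, fill_getD r L hL]

theorem fill_flatten_perm (r : ℕ) (L : List (ℕ × ℕ)) (hL : ∀ p ∈ L, p.1 < r) :
    (fill r L).flatten.Perm (L.map Prod.snd) := by
  rw [← prs_map_snd _ 0]
  exact (prs_fill_perm r L hL).map _

theorem fill_inj (r : ℕ) (L L' : List (ℕ × ℕ)) (hL : ∀ p ∈ L, p.1 < r) (hL' : ∀ p ∈ L', p.1 < r)
    (hs : L.Pairwise RR) (hs' : L'.Pairwise RR) (h : fill r L = fill r L') : L = L' := by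
  refine List.Perm.eq_of_pairwise (le := RR) (fun a b _ _ => RR_antisymm a b) hs hs' ?_
  exact (prs_fill_perm r L hL).symm.trans (h ▸ prs_fill_perm r L' hL')

theorem rowK_sorted (L : List (ℕ × ℕ)) (hs : L.Pairwise RR) (k : ℕ) :
    (rowK L k).Pairwise (· ≤ ·) := by
  unfold rowK
  rw [List.pairwise_map]
  refine (hs.sublist List.filter_sublist).imp ?_
  intro a b h; unfold RR at h; omega

/-- Every row-sorted filling is recorded by a sorted list. -/
theorem exists_fill (f : Filling) (hf : ∀ row ∈ f, row.Pairwise (· ≤ ·)) :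
    ∃ L : List (ℕ × ℕ), L.Pairwise RR ∧ (∀ p ∈ L, p.1 < f.length) ∧ f = fill f.length L := by
  have hp := List.perm_insertionSort RR (prs 0 f)
  have hs := List.pairwise_insertionSort RR (prs 0 f)
  refine ⟨(prs 0 f).insertionSort RR, hs, ?_, ?_⟩
  · intro p h
    have := prs_fst_lt f 0 p (hp.subset h); omega
  · apply List.ext_getElem
    · simp [fill]
    · intro k h1 h2
      simp only [fill, List.getElem_map, List.getElem_range]
      have hk := rowK_prs f 0 k
      rw [Nat.zero_add] at hk
      have hk' : f.getD k [] = f[k] := by simp [h1]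
      refine List.Perm.eq_of_pairwise (le := (· ≤ ·)) (fun a b _ _ => le_antisymm)
        (hf _ (List.getElem_mem h1)) (rowK_sorted _ hs k) ?_
      rw [← hk', ← hk]
      exact ((hp.filter _).map _).symm

end ColoredImm

namespace ColoredImm
universe u
variable {A : Type u}

/-! ### Splitting at ascents of the row word -/

/-- Add a letter, either as a new word or at the beginning of the first word. -/
def addL (b : Bool) (a : A) : Sentence A → Sentence A
  | [] => [[a]]
  | w :: K => if b then [a] :: w :: K else (a :: w) :: K

theorem addL_cons (b : Bool) (a : A) (w : List A) (K : Sentence A) :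
    addL b a (w :: K) = if b then [a] :: w :: K else (a :: w) :: K := rfl

/-- Split a word at the ascents of an accompanying word of rows. -/
def spl : List (ℕ × A) → Sentence A
  | [] => []
  | [x] => [[x.2]]
  | x :: y :: l => addL (decide (x.1 < y.1)) x.2 (spl (y :: l))

theorem addL_ne_nil (b : Bool) (a : A) (K : Sentence A) : addL b a K ≠ [] := by
  cases K <;> simp [addL]; split <;> simp

theorem spl_cons_ne_nil (x : ℕ × A) (l : List (ℕ × A)) : spl (x :: l) ≠ [] := by
  cases l with
  | nil => simp [spl]
  | cons y l => exact addL_ne_nil _ _ _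

theorem addL_isSentence (b : Bool) (a : A) (K : Sentence A) (h : IsSentence K) :
    IsSentence (addL b a K) := by
  cases K with
  | nil => intro w hw; simp [addL] at hw; simp [hw]
  | cons u K =>
    intro w hw
    rw [addL_cons] at hw
    split at hw
    · rcases List.mem_cons.1 hw with rfl | hw
      · simp
      · exact h w hw
    · rcases List.mem_cons.1 hw with rfl | hw
      · simp
      · exact h w (List.mem_cons_of_mem _ hw)

theorem spl_isSentence (l : List (ℕ × A)) : IsSentence (spl l) := by
  induction l with
  | nil => intro w hw; simp [spl] at hw
  | cons x l ih =>
    cases l with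
    | nil => intro w hw; simp [spl] at hw; simp [hw]
    | cons y l => exact addL_isSentence _ _ _ ih

theorem addL_flatten (b : Bool) (a : A) (K : Sentence A) :
    (addL b a K).flatten = a :: K.flatten := by
  cases K with
  | nil => simp [addL]
  | cons u K => rw [addL_cons]; split <;> simp

theorem spl_flatten (l : List (ℕ × A)) : (spl l).flatten = l.map Prod.snd := by
  induction l with
  | nil => simp [spl]
  | cons x l ih =>
    cases l with
    | nil => simp [spl]
    | cons y l => rw [spl, addL_flatten, ih]; simp

theorem refines_nil (ws : Sentence A) : Refines ws [] ↔ ws = [] := by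
  constructor
  · rintro ⟨P, _, h2, h3⟩
    simp at h3; subst h3; simpa using h2.symm
  · rintro rfl; exact ⟨[], by simp, by simp, by simp⟩

theorem refines_cons (ws : Sentence A) (w : List A) (K : Sentence A) :
    Refines ws (w :: K) ↔ ∃ p q, p ≠ [] ∧ ws = p ++ q ∧ p.flatten = w ∧ Refines q K := by
  constructor
  · rintro ⟨P, h1, h2, h3⟩
    cases P with
    | nil => simp at h3
    | cons p P =>
      simp only [List.map_cons, List.cons.injEq] at h3
      exact ⟨p, P.flatten, h1 p (by simp), by simpa using h2.symm, h3.1, P,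
        fun x hx => h1 x (by simp [hx]), rfl, h3.2⟩
  · rintro ⟨p, q, hp, rfl, rfl, P, h1, h2, h3⟩
    refine ⟨p :: P, ?_, by simp [h2], by simp [h3]⟩
    intro x hx
    rcases List.mem_cons.1 hx with rfl | hx
    · exact hp
    · exact h1 x hx

theorem refines_flatten {ws K : Sentence A} (h : Refines ws K) : ws.flatten = K.flatten := by
  obtain ⟨P, _, rfl, rfl⟩ := h
  simp [List.flatten_flatten]

theorem not_refines_nil_cons (w : List A) (K : Sentence A) : ¬ Refines [] (w :: K) := by
  rw [refines_cons]
  rintro ⟨p, q, hp, h, _⟩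
  simp at h; exact hp h.1

theorem flatten_eq_nil_of_sentence {p : Sentence A} (hp : IsSentence p) (h : p.flatten = []) :
    p = [] := by
  cases p with
  | nil => rfl
  | cons w p => simp at h; exact absurd h.1 (hp w (by simp))

theorem refines_R1 (c a : A) (ws K : Sentence A) (hws : IsSentence ws) :
    Refines ([c] :: ws) ([a] :: K) ↔ c = a ∧ Refines ws K := by
  rw [refines_cons]
  constructor
  · rintro ⟨p, q, hp, h, h2, h3⟩
    cases p with
    | nil => exact absurd rfl hp
    | cons p0 p =>
      simp only [List.cons_append, List.cons.injEq] at h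
      obtain ⟨rfl, rfl⟩ := h
      simp at h2
      obtain ⟨rfl, h2⟩ := h2
      have : p = [] := flatten_eq_nil_of_sentence (fun w hw => hws w (by simp [hw])) (by
        simpa using h2)
      subst this
      exact ⟨rfl, by simpa using h3⟩
  · rintro ⟨rfl, h⟩
    exact ⟨[[c]], ws, by simp, by simp, by simp, h⟩

theorem refines_R2 (c a : A) (w0 : List A) (hw0 : w0 ≠ []) (ws K : Sentence A) :
    Refines ([c] :: ws) ((a :: w0) :: K) ↔ c = a ∧ Refines ws (w0 :: K) := by
  rw [refines_cons, refines_cons]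
  constructor
  · rintro ⟨p, q, hp, h, h2, h3⟩
    cases p with
    | nil => exact absurd rfl hp
    | cons p0 p =>
      simp only [List.cons_append, List.cons.injEq] at h
      obtain ⟨rfl, rfl⟩ := h
      simp at h2
      obtain ⟨rfl, h2⟩ := h2
      refine ⟨rfl, p, q, ?_, rfl, h2, h3⟩
      rintro rfl
      exact hw0 (by simpa using h2.symm)
  · rintro ⟨rfl, p, q, hp, rfl, rfl, h⟩
    exact ⟨[c] :: p, q, by simp, by simp, by simp, h⟩

theorem refines_R3 (c a : A) (u : List A) (hu : u ≠ []) (ws K : Sentence A) :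
    ¬ Refines ((c :: u) :: ws) ([a] :: K) := by
  rw [refines_cons]
  rintro ⟨p, q, hp, h, h2, h3⟩
  cases p with
  | nil => exact absurd rfl hp
  | cons p0 p =>
    simp only [List.cons_append, List.cons.injEq] at h
    obtain ⟨rfl, rfl⟩ := h
    simp at h2
    exact hu h2.2.1

theorem refines_R4 (c a : A) (u w0 : List A) (ws K : Sentence A) :
    Refines ((c :: u) :: ws) ((a :: w0) :: K) ↔ c = a ∧ Refines (u :: ws) (w0 :: K) := by
  rw [refines_cons, refines_cons]
  constructor
  · rintro ⟨p, q, hp, h, h2, h3⟩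
    cases p with
    | nil => exact absurd rfl hp
    | cons p0 p =>
      simp only [List.cons_append, List.cons.injEq] at h
      obtain ⟨rfl, rfl⟩ := h
      simp at h2
      obtain ⟨rfl, h2⟩ := h2
      exact ⟨rfl, u :: p, q, by simp, by simp, by simpa using h2, h3⟩
  · rintro ⟨rfl, p, q, hp, h, h2, h3⟩
    cases p with
    | nil => exact absurd rfl hp
    | cons p0 p =>
      simp only [List.cons_append, List.cons.injEq] at h
      obtain ⟨rfl, rfl⟩ := h
      exact ⟨(c :: u) :: p, q, by simp, by simp, by simpa using h2, h3⟩

/-- The values of the letters of a monomial. -/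
def exV : Sentence A → List ℕ → List ℕ
  | w :: ws, j :: js => List.replicate w.length j ++ exV ws js
  | _, _ => []

theorem validMono_tail {w : List A} {ws : Sentence A} {j : ℕ} {js : List ℕ}
    (h : ValidMono (w :: ws, j :: js)) : ValidMono (ws, js) := by
  obtain ⟨h1, h2, h3, h4⟩ := h
  refine ⟨by simpa using h1, ?_, fun x hx => h3 x (by simp [hx]), fun x hx => h4 x (by simp [hx])⟩
  exact List.IsChain.tail h2

theorem validMono_lt {w : List A} {ws : Sentence A} {j : ℕ} {js : List ℕ}
    (h : ValidMono (w :: ws, j :: js)) : ∀ x ∈ js, j < x := by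
  have h2 : List.IsChain (· < ·) (j :: js) := h.2.1
  rw [List.isChain_iff_pairwise, List.pairwise_cons] at h2
  exact h2.1

theorem validMono_ne {w : List A} {ws : Sentence A} {j : ℕ} {js : List ℕ}
    (h : ValidMono (w :: ws, j :: js)) : w ≠ [] := h.2.2.2 w (by simp)

theorem mem_exV (ws : Sentence A) : ∀ js, ∀ x ∈ exV ws js, x ∈ js := by
  induction ws with
  | nil => simp [exV]
  | cons w ws ih =>
    intro js x hx
    cases js with
    | nil => simp [exV] at hx
    | cons j js =>
      simp only [exV, List.mem_append, List.mem_replicate] at hx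
      rcases hx with hx | hx
      · simp [hx.2]
      · exact List.mem_cons_of_mem _ (ih _ _ hx)

theorem length_exV (ws : Sentence A) : ∀ js, ws.length = js.length →
    (exV ws js).length = ws.flatten.length := by
  induction ws with
  | nil => simp [exV]
  | cons w ws ih =>
    intro js h
    cases js with
    | nil => simp at h
    | cons j js => simp [exV, ih js (by simpa using h)]

theorem refines_spl (ρ : List ℕ) : ∀ (w : List A) (ws : Sentence A) (js : List ℕ),
    ρ.length = w.length → ValidMono (ws, js) →
    (Refines ws (spl (ρ.zip w)) ↔ w = ws.flatten ∧ (ρ.zip (exV ws js)).IsChain RR) := by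
  induction ρ with
  | nil =>
    intro w ws js hl hv
    have hw : w = [] := by simpa using hl.symm
    subst hw
    simp only [List.zip_nil_left, spl, refines_nil, List.isChain_nil, and_true]
    constructor
    · rintro rfl; rfl
    · intro h; exact flatten_eq_nil_of_sentence hv.2.2.2 h.symm
  | cons x ρ ih =>
    intro w ws js hl hv
    cases w with
    | nil => simp at hl
    | cons a w =>
    have hl' : ρ.length = w.length := by simpa using hl
    cases ws with
    | nil =>
      have : ¬ Refines [] (spl ((x :: ρ).zip (a :: w))) := by
        rw [List.zip_cons_cons]
        cases hK : spl ((x, a) :: ρ.zip w) with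
        | nil => exact absurd hK (spl_cons_ne_nil _ _)
        | cons w K => exact not_refines_nil_cons w K
      simp only [this, false_iff]
      simp
    | cons w0 ws =>
    cases js with
    | nil => simp [ValidMono] at hv
    | cons j js =>
    have hvt := validMono_tail hv
    have hlt := validMono_lt hv
    cases w0 with
    | nil => exact absurd rfl (validMono_ne hv)
    | cons c u =>
    by_cases hu : u = []
    · -- singleton first word
      subst hu
      have key : Refines ([c] :: ws) (spl ((x :: ρ).zip (a :: w))) ↔
          c = a ∧ Refines ws (spl (ρ.zip w)) := by
        cases ρ with
        | nil =>
          simp only [List.zip_cons_cons, List.zip_nil_left, spl]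
          exact refines_R1 _ _ _ _ hvt.2.2.2
        | cons y ρ =>
          cases w with
          | nil => simp at hl'
          | cons b w =>
            simp only [List.zip_cons_cons, spl]
            cases hK : spl ((y, b) :: ρ.zip w) with
            | nil => exact absurd hK (spl_cons_ne_nil _ _)
            | cons w1 K =>
              have hw1 : w1 ≠ [] := spl_isSentence ((y, b) :: ρ.zip w) w1 (by simp [hK])
              rw [addL_cons]
              split
              · exact refines_R1 _ _ _ _ hvt.2.2.2
              · exact refines_R2 _ _ _ hw1 _ _
      rw [key, ih w ws js hl' hvt]
      simp only [exV, List.length_cons, List.length_nil, Nat.zero_add, List.replicate_one,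
        List.singleton_append, List.zip_cons_cons, List.flatten_cons, List.cons.injEq]
      rw [List.isChain_cons]
      constructor
      · rintro ⟨rfl, rfl, h⟩
        refine ⟨⟨rfl, rfl⟩, ?_, h⟩
        intro y hy
        have hy' := List.mem_of_mem_head? hy
        have := hlt _ (mem_exV _ _ _ (List.of_mem_zip hy').2)
        exact Or.inl this
      · rintro ⟨⟨rfl, rfl⟩, _, h⟩
        exact ⟨rfl, rfl, h⟩
    · have hv' : ValidMono (u :: ws, j :: js) := by
        obtain ⟨h1, h2, h3, h4⟩ := hv
        refine ⟨h1, h2, h3, ?_⟩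
        intro z hz
        rcases List.mem_cons.1 hz with rfl | hz
        · exact hu
        · exact hvt.2.2.2 z hz
      cases ρ with
      | nil =>
        have hw : w = [] := by simpa using hl'.symm
        subst hw
        simp only [List.zip_cons_cons, List.zip_nil_left, spl]
        have h1 := refines_R3 c a u hu ws []
        simp [h1, hu]
      | cons y ρ =>
        cases w with
        | nil => simp at hl'
        | cons b w =>
          obtain ⟨d, u, rfl⟩ := List.exists_cons_of_ne_nil hu
          have key : Refines ((c :: d :: u) :: ws) (spl ((x :: y :: ρ).zip (a :: b :: w))) ↔
              c = a ∧ y ≤ x ∧ Refines ((d :: u) :: ws) (spl ((y :: ρ).zip (b :: w))) := by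
            simp only [List.zip_cons_cons, spl]
            cases hK : spl ((y, b) :: ρ.zip w) with
            | nil => exact absurd hK (spl_cons_ne_nil _ _)
            | cons w1 K =>
              rw [addL_cons]
              split
              · rename_i hxy
                simp only [decide_eq_true_eq] at hxy
                have h1 := refines_R3 c a (d :: u) hu ws (w1 :: K)
                simp only [h1, false_iff]
                rintro ⟨_, h, _⟩
                omega
              · rename_i hxy
                simp only [decide_eq_true_eq] at hxy
                rw [refines_R4]
                have : y ≤ x := by omega
                simp [this]
          rw [key, ih (b :: w) ((d :: u) :: ws) (j :: js) hl' hv']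
          simp only [exV, List.length_cons, List.replicate_succ, List.cons_append,
            List.zip_cons_cons, List.flatten_cons, List.cons.injEq, List.isChain_cons_cons]
          have : RR (x, j) (y, j) ↔ y ≤ x := by simp [RR]
          rw [this]
          constructor
          · rintro ⟨rfl, h1, ⟨rfl, rfl⟩, h2⟩
            exact ⟨⟨rfl, rfl, rfl⟩, h1, h2⟩
          · rintro ⟨⟨rfl, rfl, rfl⟩, h1, h2⟩
            exact ⟨rfl, h1, ⟨rfl, rfl⟩, h2⟩

/-! ### The bridge with `coA` -/

theorem splitByComp_eq_spl (r : ℕ → ℕ) : ∀ (n : ℕ) (c : ℕ) (w : List A), w.length = n + 1 →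
    splitByComp w (List.zipWith (fun a b => b - a)
      (c :: (List.range' (c + 1) n).filter (fun i => decide (r i < r (i + 1))))
      ((List.range' (c + 1) n).filter (fun i => decide (r i < r (i + 1))) ++ [c + n + 1])) =
    spl (((List.range' (c + 1) (n + 1)).map r).zip w) := by
  intro n
  induction n with
  | zero =>
    intro c w hw
    obtain ⟨a, rfl⟩ := List.length_eq_one_iff.1 hw
    simp [splitByComp, spl, show c + 1 - c = 1 by omega]
  | succ n ih =>
    intro c w hw
    obtain ⟨a, w, rfl⟩ := List.exists_cons_of_length_eq_add_one hw
    have hw' : w.length = n + 1 := by simpa using hw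
    obtain ⟨b, w, rfl⟩ := List.exists_cons_of_length_eq_add_one hw'
    have ih' := ih (c + 1) (b :: w) hw'
    rw [List.range'_succ (s := c + 1) (n := n), List.range'_succ (s := c + 1) (n := n + 1)]
    have e2 : spl ((List.map r ((c + 1) :: List.range' (c + 1 + 1) (n + 1))).zip (a :: b :: w)) =
       addL (decide (r (c + 1) < r (c + 1 + 1))) a
        (spl ((List.map r (List.range' (c + 1 + 1) (n + 1))).zip (b :: w))) := by
      rw [List.range'_succ (s := c + 1 + 1)]
      simp [spl]
    rw [e2, ← ih', show c + (n + 1) + 1 = c + 1 + n + 1 by omega, List.filter_cons]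
    set ds := (List.range' (c + 1 + 1) n).filter (fun i => decide (r i < r (i + 1))) with hds
    have hds1 : ∀ x ∈ ds, c + 1 < x := by
      intro x hx
      rw [hds, List.mem_filter, List.mem_range'_1] at hx
      omega
    clear_value ds
    by_cases hasc : r (c + 1) < r (c + 1 + 1)
    · simp only [hasc, decide_true, if_true, List.cons_append, List.zipWith_cons_cons,
        splitByComp]
      rw [show c + 1 - c = 1 by omega]
      simp only [List.take_succ_cons, List.take_zero, List.drop_succ_cons, List.drop_zero]
      cases hK : ds with
      | nil => simp [splitByComp, addL]
      | cons d ds' => simp [splitByComp, addL]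
    · simp only [hasc, decide_false, Bool.false_eq_true, if_false]
      cases hK : ds with
      | nil =>
        simp [splitByComp, addL, show c + 1 + n + 1 - c = n + 1 + 1 by omega,
          show c + 1 + n + 1 - (c + 1) = n + 1 by omega]
      | cons d ds' =>
        have : c + 1 < d := hds1 d (by simp [hK])
        obtain ⟨e, rfl⟩ : ∃ e, d = c + 1 + 1 + e := ⟨d - (c + 2), by omega⟩
        simp only [List.cons_append, List.zipWith_cons_cons, splitByComp, addL,
          Bool.false_eq_true, if_false]
        rw [show c + 1 + 1 + e - c = e + 1 + 1 by omega,
          show c + 1 + 1 + e - (c + 1) = e + 1 by omega]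
        simp

theorem coA_eq_spl [Inhabited A] (I : Sentence A) (f : Filling) :
    coA I f = spl (((List.range' 1 (nBoxes f)).map (rowOf f)).zip (readWord I f)) := by
  unfold coA
  split
  · rename_i h; simp [h, spl]
  · rename_i h
    obtain ⟨n, hn⟩ := Nat.exists_eq_succ_of_ne_zero h
    have := splitByComp_eq_spl (rowOf f) n 0 (readWord I f) (by simp [readWord, hn])
    simp only [Nat.zero_add] at this
    rw [hn, ← this]
    unfold compOf descList
    simp [hn]

end ColoredImm

namespace ColoredImm
universe u
variable {A : Type u}

/-! ### Reading words and the tableau bijection -/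

/-- Read the letters of a family of words in the order prescribed by a word of rows. -/
def rd [Inhabited A] (g : ℕ → List A) : List ℕ → List A
  | [] => []
  | k :: ρ => (g k).headD default :: rd (Function.update g k (g k).tail) ρ

/-- The family of words of a sentence. -/
def wordsOf (I : Sentence A) : ℕ → List A := fun k => I.getD k []

/-- Words of rows of standard colored immaculate tableaux of shape `I`. -/
def XX (I : Sentence A) (ρ : List ℕ) : Prop :=
  (∀ k, ρ.count k = (wordsOf I k).length) ∧ ∀ k, k + 1 ∈ ρ → ρ.idxOf k < ρ.idxOf (k + 1)

@[simp] theorem length_rd [Inhabited A] (ρ : List ℕ) : ∀ g : ℕ → List A, (rd g ρ).length = ρ.length := by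
  induction ρ with
  | nil => simp [rd]
  | cons k ρ ih => intro g; simp [rd, ih]

theorem T_row [Inhabited A] (k : ℕ) (ρ : List ℕ) : ∀ (g : ℕ → List A) (vals : List ℕ),
    (∀ j, ρ.count j = (g j).length) → ρ.length = vals.length →
    ((ρ.zip ((rd g ρ).zip vals)).filter (fun p => p.1 == k)).map Prod.snd =
      (g k).zip (rowK (ρ.zip vals) k) := by
  induction ρ with
  | nil =>
    intro g vals h _
    simp [rowK]
  | cons a ρ ih =>
    intro g vals h hl
    cases vals with
    | nil => simp at hl
    | cons v vals =>
      have hl' : ρ.length = vals.length := by simpa using hl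
      have ha := h a
      rw [List.count_cons_self] at ha
      obtain ⟨x, t, hx⟩ := List.exists_cons_of_length_eq_add_one ha.symm
      have hg : ∀ j, ρ.count j = ((Function.update g a (g a).tail) j).length := by
        intro j
        by_cases hj : j = a
        · subst hj; simp [← ha]
        · have := h j
          rw [List.count_cons_of_ne (Ne.symm hj)] at this
          simp [hj, this]
      have := ih _ vals hg hl'
      simp only [rd, List.zip_cons_cons]
      by_cases hk : a = k
      · subst hk
        simp only [rowK, List.filter_cons, beq_self_eq_true, if_true, List.map_cons] at this ⊢
        rw [this, hx]
        simp
      · have hk' : k ≠ a := Ne.symm hk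
        simp only [rowK, List.filter_cons, beq_iff_eq, hk, if_false] at this ⊢
        rw [this]
        simp [hk']

theorem XX_lt {I : Sentence A} {ρ : List ℕ} (h : XX I ρ) : ∀ k ∈ ρ, k < I.length := by
  intro k hk
  by_contra hlt
  have h1 := h.1 k
  have h2 := List.count_pos_iff.2 hk
  have : wordsOf I k = [] := by simp [wordsOf, Nat.le_of_not_lt hlt]
  rw [this, List.length_nil, List.count_eq_zero] at h1; exact h1 hk

theorem XX_mem {I : Sentence A} (hI : IsSentence I) {ρ : List ℕ}
    (h : ∀ k, ρ.count k = (wordsOf I k).length) : ∀ k < I.length, k ∈ ρ := by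
  intro k hk
  rw [← List.count_pos_iff, h k]
  have : wordsOf I k = I[k] := by simp [wordsOf, hk]
  rw [this]
  exact List.length_pos_iff.2 (hI _ (List.getElem_mem hk))

theorem zip_lt {r : ℕ} {ρ vals : List ℕ} (h : ∀ k ∈ ρ, k < r) : ∀ p ∈ ρ.zip vals, p.1 < r :=
  fun p hp => h _ (List.of_mem_zip (a := p.1) (b := p.2) hp).1

theorem head_rowK (k : ℕ) (ρ : List ℕ) : ∀ vals : List ℕ, ρ.length = vals.length →
    (rowK (ρ.zip vals) k).head? = vals[ρ.idxOf k]? := by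
  induction ρ with
  | nil => intro vals h; simp at h; simp [rowK, List.eq_nil_of_length_eq_zero h.symm]
  | cons a ρ ih =>
    intro vals h
    cases vals with
    | nil => simp at h
    | cons v vals =>
      have := ih vals (by simpa using h)
      by_cases hk : a = k
      · subst hk; simp [rowK]
      · rw [List.idxOf_cons_ne _ hk]
        simp only [rowK, List.zip_cons_cons, List.filter_cons, beq_iff_eq, hk, if_false] at this ⊢
        rw [this]; simp

theorem length_rowK (k : ℕ) (ρ : List ℕ) : ∀ vals : List ℕ, ρ.length = vals.length →
    (rowK (ρ.zip vals) k).length = ρ.count k := by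
  induction ρ with
  | nil => intro vals h; simp [rowK]
  | cons a ρ ih =>
    intro vals h
    cases vals with
    | nil => simp at h
    | cons v vals =>
      have := ih vals (by simpa using h)
      by_cases hk : a = k
      · subst hk; simp [rowK] at this ⊢; exact this
      · simp [rowK, hk] at this ⊢; exact this

theorem idx_lt_iff (k : ℕ) (ρ vals : List ℕ) (hl : ρ.length = vals.length)
    (hs : (ρ.zip vals).Pairwise RR) (h1 : ρ.idxOf k < ρ.length) (h2 : ρ.idxOf (k + 1) < ρ.length) :
    ρ.idxOf k < ρ.idxOf (k + 1) ↔
      vals[ρ.idxOf k]'(hl ▸ h1) < vals[ρ.idxOf (k + 1)]'(hl ▸ h2) := by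
  have e1 : ρ[ρ.idxOf k] = k := List.getElem_idxOf h1
  have e2 : ρ[ρ.idxOf (k + 1)] = k + 1 := List.getElem_idxOf h2
  rw [List.pairwise_iff_getElem] at hs
  have hlen : (ρ.zip vals).length = ρ.length := by simp [hl]
  rcases lt_trichotomy (ρ.idxOf k) (ρ.idxOf (k + 1)) with h | h | h
  · have := hs _ _ (hlen ▸ h1) (hlen ▸ h2) h
    simp only [List.getElem_zip, e1, e2, RR] at this
    simp only [h, true_iff]; omega
  · exfalso
    have e3 : ρ[ρ.idxOf k] = ρ[ρ.idxOf (k + 1)] := by simp only [h]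
    omega
  · have := hs _ _ (hlen ▸ h2) (hlen ▸ h1) h
    simp only [List.getElem_zip, e1, e2, RR] at this
    constructor <;> intro h' <;> omega

theorem isChain_map_range (r : ℕ) (h : ℕ → ℕ) :
    ((List.range r).map h).IsChain (· < ·) ↔ ∀ k, k + 1 < r → h k < h (k + 1) := by
  rw [List.isChain_iff_getElem]
  simp

theorem filterMap_head (r : ℕ) (F : ℕ → List ℕ) (h : ∀ k < r, F k ≠ []) :
    ((List.range r).map F).filterMap List.head? = (List.range r).map (fun k => (F k).headD 0) := by
  rw [List.filterMap_map, ← List.filterMap_eq_map]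
  apply List.filterMap_congr
  intro k hk
  obtain ⟨a, t, e⟩ := List.exists_cons_of_ne_nil (h k (List.mem_range.1 hk))
  simp [e]

theorem column_iff {I : Sentence A} (hI : IsSentence I) (ρ vals : List ℕ)
    (hl : ρ.length = vals.length) (hc : ∀ k, ρ.count k = (wordsOf I k).length)
    (hs : (ρ.zip vals).Pairwise RR) :
    (((fill I.length (ρ.zip vals)).filterMap List.head?).Chain' (· < ·)) ↔
      ∀ k, k + 1 ∈ ρ → ρ.idxOf k < ρ.idxOf (k + 1) := by
  have hne : ∀ k < I.length, rowK (ρ.zip vals) k ≠ [] := by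
    intro k hk h0
    have := length_rowK k ρ vals hl
    rw [h0] at this
    exact (List.count_pos_iff.2 (XX_mem hI hc k hk)).ne this
  have hhead : ∀ k (hk : ρ.idxOf k < ρ.length),
      (rowK (ρ.zip vals) k).headD 0 = vals[ρ.idxOf k]'(hl ▸ hk) := by
    intro k hk
    rw [List.headD_eq_head?_getD, head_rowK k ρ vals hl]
    simp [hl ▸ hk]
  unfold List.Chain' fill
  rw [filterMap_head _ _ hne, isChain_map_range]
  have hmemlt : ∀ k ∈ ρ, k < I.length := by
    intro k hk
    by_contra hlt
    have h1 := hc k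
    have : wordsOf I k = [] := by simp [wordsOf, Nat.le_of_not_lt hlt]
    rw [this, List.length_nil, List.count_eq_zero] at h1; exact h1 hk
  constructor
  · intro h k hk
    have hk1 := hmemlt _ hk
    have hk0 : k ∈ ρ := XX_mem hI hc k (by omega)
    have i1 := List.idxOf_lt_length_iff.2 hk0
    have i2 := List.idxOf_lt_length_iff.2 hk
    rw [idx_lt_iff k ρ vals hl hs i1 i2, ← hhead k i1, ← hhead (k + 1) i2]
    exact h k hk1
  · intro h k hk
    have hk0 : k ∈ ρ := XX_mem hI hc k (by omega)
    have hk1 : k + 1 ∈ ρ := XX_mem hI hc (k + 1) hk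
    have i1 := List.idxOf_lt_length_iff.2 hk0
    have i2 := List.idxOf_lt_length_iff.2 hk1
    rw [hhead k i1, hhead (k + 1) i2, ← idx_lt_iff k ρ vals hl hs i1 i2]
    exact h k hk1

theorem fill_isCIT {I : Sentence A} (hI : IsSentence I) (ρ vals : List ℕ) (hX : XX I ρ)
    (hl : ρ.length = vals.length) (hs : (ρ.zip vals).Pairwise RR) (hv : ∀ x ∈ vals, 1 ≤ x) :
    IsCIT I (fill I.length (ρ.zip vals)) := by
  refine ⟨?_, ?_, (column_iff hI ρ vals hl hX.1 hs).2 hX.2, ?_⟩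
  · apply List.ext_getElem
    · simp [fill]
    · intro k h1 h2
      have hk : k < I.length := by simpa using h2
      simp only [fill, List.getElem_map, List.getElem_range]
      rw [length_rowK k ρ vals hl, hX.1 k]
      simp [wordsOf, hk]
  · intro row hrow
    simp only [fill, List.mem_map] at hrow
    obtain ⟨k, _, rfl⟩ := hrow
    exact List.isChain_iff_pairwise.2 (rowK_sorted _ hs k)
  · intro x hx
    have := (fill_flatten_perm I.length _ (zip_lt (vals := vals) (XX_lt hX))).subset hx
    rw [List.map_snd_zip (by omega)] at this
    exact hv x this

theorem exists_of_isCIT {I : Sentence A} (hI : IsSentence I) (f : Filling) (hf : IsCIT I f) :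
    ∃ ρ vals, XX I ρ ∧ ρ.length = vals.length ∧ (ρ.zip vals).Pairwise RR ∧ (∀ x ∈ vals, 1 ≤ x) ∧
      f = fill I.length (ρ.zip vals) := by
  obtain ⟨h1, h2, h3, h4⟩ := hf
  obtain ⟨L, hs, hlt, hfill⟩ := exists_fill f (fun row hrow => List.isChain_iff_pairwise.1 (h2 row hrow))
  have hlen : f.length = I.length := by simpa using congrArg List.length h1
  rw [hlen] at hlt hfill
  have hz : (L.map Prod.fst).zip (L.map Prod.snd) = L := by
    rw [List.zip_map']; simp
  have hl : (L.map Prod.fst).length = (L.map Prod.snd).length := by simp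
  have hc : ∀ k, (L.map Prod.fst).count k = (wordsOf I k).length := by
    intro k
    rw [← length_rowK k _ _ hl, hz, ← fill_getD I.length L hlt, ← hfill]
    have := congrArg (fun l : List ℕ => l.getD k 0) h1
    simp only [wordsOf]
    by_cases hk : k < I.length
    · simpa [hk, hlen] using this
    · simp [Nat.le_of_not_lt hk, hlen]
  refine ⟨L.map Prod.fst, L.map Prod.snd, ⟨hc, ?_⟩, hl, by rwa [hz], ?_, by rw [hz]; exact hfill⟩
  · rw [← column_iff hI _ _ hl hc (by rwa [hz]), hz, ← hfill]
    exact h3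
  · intro x hx
    apply h4
    rw [hfill]
    exact (fill_flatten_perm I.length L hlt).symm.subset hx

theorem zip_fill (I : Sentence A) (L : List (ℕ × ℕ)) :
    I.zip (fill I.length L) = (List.range I.length).map (fun k => (wordsOf I k, rowK L k)) := by
  apply List.ext_getElem
  · simp [fill]
  · intro k h1 h2
    have hk : k < I.length := by simpa using h2
    simp [fill, wordsOf, hk]

theorem typeWord_fill [Inhabited A] {I : Sentence A} (ρ vals : List ℕ) (hX : XX I ρ)
    (hl : ρ.length = vals.length) (hs : (ρ.zip vals).Pairwise RR) (v : ℕ) :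
    typeWord I (fill I.length (ρ.zip vals)) v =
      (((rd (wordsOf I) ρ).zip vals).filter (fun p => p.2 == v)).map Prod.fst := by
  set T := ρ.zip ((rd (wordsOf I) ρ).zip vals) with hT
  have hTs : T.map Prod.snd = (rd (wordsOf I) ρ).zip vals := by
    rw [hT, List.map_snd_zip (by simp [hl])]
  have hTpair : T.map (fun p => (p.1, p.2.2)) = ρ.zip vals := by
    apply List.ext_getElem
    · simp [hT, hl]
    · intro k h1 h2; simp [hT]
  have hsT : T.Pairwise (fun a b => RR (a.1, a.2.2) (b.1, b.2.2)) := by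
    rw [← hTpair, List.pairwise_map] at hs
    exact hs
  set Tv := T.filter (fun p => p.2.2 == v) with hTv
  have hfib := eq_flatten_fibers (· > ·) (fun p : ℕ × (A × ℕ) => p.1) (List.range I.length).reverse Tv
    (fun k => lt_irrefl k) (by
      rw [List.pairwise_reverse]
      exact List.pairwise_lt_range) (by
      refine List.Pairwise.imp_of_mem ?_ (hsT.sublist List.filter_sublist)
      intro a b ha hb hab
      rw [List.mem_filter] at ha hb
      have h1 := ha.2; have h2 := hb.2
      simp only [beq_iff_eq] at h1 h2
      unfold RR at hab
      simp only at hab ⊢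
      omega) (by
      intro a ha
      rw [List.mem_filter] at ha
      have := (List.of_mem_zip (a := a.1) (b := a.2) ha.1).1
      simpa using XX_lt hX _ this)
  have hR : (((rd (wordsOf I) ρ).zip vals).filter (fun p => p.2 == v)).map Prod.fst =
      Tv.map (fun p => p.2.1) := by
    rw [← hTs, List.filter_map, List.map_map]; rfl
  rw [hR, hfib]
  unfold typeWord
  rw [zip_fill, ← List.map_reverse, List.map_map, List.map_flatten, List.map_map]
  congr 1
  apply List.map_congr_left
  intro k _
  simp only [Function.comp, rowWith]
  rw [← T_row k ρ (wordsOf I) vals hX.1 hl, ← hT, List.filter_map, List.map_map, hTv,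
    List.filter_filter, List.filter_filter]
  have : (T.filter fun a => (((fun p : A × ℕ => p.2 == v) ∘ Prod.snd) a && a.1 == k)) =
      T.filter fun a => (decide (a.1 = k) && a.2.2 == v) := by
    apply List.filter_congr
    intro a _
    simp only [Function.comp]
    rw [Bool.and_comm]
    congr 1
  rw [this]; rfl

end ColoredImm

namespace ColoredImm
universe u
variable {A : Type u}

/-! ### Monomials -/

/-- The letters of a monomial with their values. -/
def exE : Sentence A → List ℕ → List (A × ℕ)
  | w :: ws, j :: js => w.map (fun a => (a, j)) ++ exE ws js
  | _, _ => []

theorem exE_snd (ws : Sentence A) : ∀ js, (exE ws js).map Prod.snd = exV ws js := by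
  induction ws with
  | nil => simp [exE, exV]
  | cons w ws ih =>
    intro js
    cases js with
    | nil => simp [exE, exV]
    | cons j js => simp [exE, exV, ih, Function.comp_def, List.map_const']

theorem exE_fst (ws : Sentence A) : ∀ js, ws.length = js.length →
    (exE ws js).map Prod.fst = ws.flatten := by
  induction ws with
  | nil => simp [exE]
  | cons w ws ih =>
    intro js h
    cases js with
    | nil => simp at h
    | cons j js => simp [exE, ih js (by simpa using h), Function.comp_def]

theorem mem_exE_snd (ws : Sentence A) (js : List ℕ) (p : A × ℕ) (hp : p ∈ exE ws js) :
    p.2 ∈ js := by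
  apply mem_exV ws
  rw [← exE_snd]
  exact List.mem_map_of_mem hp

theorem exE_filter_self {w : List A} {ws : Sentence A} {j : ℕ} {js : List ℕ}
    (h : ValidMono (w :: ws, j :: js)) :
    (exE (w :: ws) (j :: js)).filter (fun p => p.2 == j) = w.map (fun a => (a, j)) ∧
    (exE (w :: ws) (j :: js)).filter (fun p => !(p.2 == j)) = exE ws js := by
  have hlt : ∀ p ∈ exE ws js, j < p.2 := fun p hp => validMono_lt h _ (mem_exE_snd ws js p hp)
  constructor
  · rw [exE, List.filter_append, List.filter_eq_self.2, List.filter_eq_nil_iff.2, List.append_nil]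
    · intro p hp; have := hlt p hp; simp; omega
    · intro p hp; rw [List.mem_map] at hp; obtain ⟨a, _, rfl⟩ := hp; simp
  · rw [exE, List.filter_append, List.filter_eq_nil_iff.2, List.filter_eq_self.2, List.nil_append]
    · intro p hp; have := hlt p hp; simp; omega
    · intro p hp; rw [List.mem_map] at hp; obtain ⟨a, _, rfl⟩ := hp; simp

theorem exE_inj (ws : Sentence A) : ∀ (js : List ℕ) (ws' : Sentence A) (js' : List ℕ),
    ValidMono (ws, js) → ValidMono (ws', js') → exE ws js = exE ws' js' → ws = ws' ∧ js = js' := by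
  have hne : ∀ (w : List A) (ws : Sentence A) (j : ℕ) (js : List ℕ),
      ValidMono (w :: ws, j :: js) → ∃ a t, exE (w :: ws) (j :: js) = (a, j) :: t := by
    intro w ws j js h
    obtain ⟨a, u, rfl⟩ := List.exists_cons_of_ne_nil (validMono_ne h)
    exact ⟨a, _, rfl⟩
  induction ws with
  | nil =>
    intro js ws' js' h h' he
    have : js = [] := by have := h.1; simpa using this.symm
    subst this
    cases ws' with
    | nil => have := h'.1; exact ⟨rfl, by simpa [eq_comm] using this⟩
    | cons w' ws' =>
      cases js' with
      | nil => have := h'.1; simp at this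
      | cons j' js' =>
        obtain ⟨a, t, e⟩ := hne _ _ _ _ h'
        rw [e] at he; simp [exE] at he
  | cons w ws ih =>
    intro js ws' js' h h' he
    cases js with
    | nil => have := h.1; simp at this
    | cons j js =>
      obtain ⟨a, t, e⟩ := hne _ _ _ _ h
      cases ws' with
      | nil => rw [e] at he; simp [exE] at he
      | cons w' ws' =>
        cases js' with
        | nil => have := h'.1; simp at this
        | cons j' js' =>
          obtain ⟨a', t', e'⟩ := hne _ _ _ _ h'
          have hj : j = j' := by
            have := he; rw [e, e'] at this; simp at this; exact this.1.2
          subst hj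
          have f1 := exE_filter_self h
          have f2 := exE_filter_self h'
          rw [he] at f1
          have hw : w = w' := by
            have := congrArg (List.map Prod.fst) (f1.1.symm.trans f2.1)
            simpa [Function.comp_def] using this
          have := ih js ws' js' (validMono_tail h) (validMono_tail h') (f1.2.symm.trans f2.2)
          exact ⟨by rw [hw, this.1], by rw [this.2]⟩

theorem exE_map (g : ℕ → List A) (vs : List ℕ) :
    exE (vs.map g) vs = (vs.map (fun v => (g v).map (fun a => (a, v)))).flatten := by
  induction vs with
  | nil => simp [exE]
  | cons v vs ih => simp [exE, ih]

theorem le_maxEntry (l : List ℕ) : ∀ x ∈ l, x ≤ l.foldr max 0 := by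
  induction l with
  | nil => simp
  | cons a l ih =>
    intro x hx
    rcases List.mem_cons.1 hx with rfl | hx
    · simp
    · have := ih x hx; simp; omega

/-- The sorted list of values occurring in a filling. -/
def valsOf (I : Sentence A) (f : Filling) : List ℕ :=
  ((List.range (maxEntry f)).map (· + 1)).filter (fun v => !(typeWord I f v).isEmpty)

theorem monoOf_eq (I : Sentence A) (f : Filling) :
    monoOf I f = ((valsOf I f).map (typeWord I f), valsOf I f) := rfl

theorem valsOf_pairwise (I : Sentence A) (f : Filling) : (valsOf I f).Pairwise (· < ·) := by
  apply List.Pairwise.filter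
  rw [List.pairwise_map]
  exact List.pairwise_lt_range.imp (by omega)

theorem monoOf_valid (I : Sentence A) (f : Filling) : ValidMono (monoOf I f) := by
  rw [monoOf_eq]
  refine ⟨by simp, List.isChain_iff_pairwise.2 (valsOf_pairwise I f), ?_, ?_⟩
  · intro j hj
    simp [valsOf] at hj; omega
  · intro w hw
    simp only [List.mem_map] at hw
    obtain ⟨v, hv, rfl⟩ := hw
    simp only [valsOf, List.mem_filter] at hv
    simpa using hv.2

theorem vals_sorted {ρ vals : List ℕ} (hl : ρ.length = vals.length)
    (hs : (ρ.zip vals).Pairwise RR) : vals.Pairwise (· ≤ ·) := by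
  have : vals = (ρ.zip vals).map Prod.snd := by rw [List.map_snd_zip (by omega)]
  rw [this, List.pairwise_map]
  refine hs.imp ?_
  intro a b h; unfold RR at h; omega

theorem exE_monoOf [Inhabited A] {I : Sentence A} (ρ vals : List ℕ) (hX : XX I ρ)
    (hl : ρ.length = vals.length) (hs : (ρ.zip vals).Pairwise RR) (hv : ∀ x ∈ vals, 1 ≤ x) :
    exE (monoOf I (fill I.length (ρ.zip vals))).1 (monoOf I (fill I.length (ρ.zip vals))).2 =
      (rd (wordsOf I) ρ).zip vals := by
  set f := fill I.length (ρ.zip vals) with hf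
  set E := (rd (wordsOf I) ρ).zip vals with hE
  have hEs : E.map Prod.snd = vals := by rw [hE, List.map_snd_zip (by simp [hl])]
  have htw : ∀ v, typeWord I f v = (E.filter (fun p => p.2 == v)).map Prod.fst :=
    fun v => typeWord_fill ρ vals hX hl hs v
  have hfib := eq_flatten_fibers (· < ·) (fun p : A × ℕ => p.2) (valsOf I f) E
    (fun k => lt_irrefl k) (valsOf_pairwise I f) (by
      have := vals_sorted hl hs
      rw [← hEs, List.pairwise_map] at this
      exact this.imp (fun h => not_lt.2 h)) (by
      intro a ha
      have hav : a.2 ∈ vals := hEs ▸ List.mem_map_of_mem ha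
      have h1 := hv _ hav
      have h2 : a.2 ∈ f.flatten := by
        apply (fill_flatten_perm I.length _ (zip_lt (vals := vals) (XX_lt hX))).symm.subset
        rw [List.map_snd_zip (by omega)]
        exact hav
      have h3 : a.2 ≤ maxEntry f := le_maxEntry _ _ h2
      simp only [valsOf, List.mem_filter, List.mem_map, List.mem_range]
      refine ⟨⟨a.2 - 1, by omega, by omega⟩, ?_⟩
      rw [htw]
      have : a ∈ E.filter (fun p => p.2 == a.2) := by simp [List.mem_filter, ha]
      cases hq : E.filter (fun p => p.2 == a.2) with
      | nil => rw [hq] at this; simp at this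
      | cons b t => simp)
  rw [monoOf_eq]
  simp only
  rw [exE_map, hfib]
  congr 1
  apply List.map_congr_left
  intro v _
  rw [htw, List.map_map]
  have h1 : (E.filter (fun p => p.2 == v)) = E.filter (fun a => decide (a.2 = v)) := by
    apply List.filter_congr
    intro a _; rfl
  rw [h1]
  conv_rhs => rw [← List.map_id (E.filter _)]
  apply List.map_congr_left
  rintro ⟨a, b⟩ hab
  rw [List.mem_filter] at hab
  have := hab.2
  simp only [decide_eq_true_eq] at this
  simp [this]

theorem monoOf_fill_iff [Inhabited A] {I : Sentence A} (ρ vals : List ℕ) (hX : XX I ρ)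
    (hl : ρ.length = vals.length) (hs : (ρ.zip vals).Pairwise RR) (hv : ∀ x ∈ vals, 1 ≤ x)
    (m : Mono A) (hm : ValidMono m) :
    monoOf I (fill I.length (ρ.zip vals)) = m ↔
      rd (wordsOf I) ρ = m.1.flatten ∧ vals = exV m.1 m.2 := by
  have h := exE_monoOf ρ vals hX hl hs hv
  constructor
  · intro e
    rw [e] at h
    constructor
    · rw [← exE_fst m.1 m.2 hm.1, h, List.map_fst_zip (by simp [hl])]
    · rw [← exE_snd m.1 m.2, h, List.map_snd_zip (by simp [hl])]
  · rintro ⟨h1, h2⟩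
    have e : (rd (wordsOf I) ρ).zip vals = exE m.1 m.2 := by
      rw [h1, h2, ← exE_fst m.1 m.2 hm.1, ← exE_snd m.1 m.2, List.zip_map']
      simp
    rw [e] at h
    have := exE_inj _ _ _ _ (monoOf_valid I _) hm h
    exact Prod.ext this.1 this.2

/-! ### Standard fillings -/

theorem range'_sorted_zip (ρ : List ℕ) (s n : ℕ) : (ρ.zip (List.range' s n)).Pairwise RR := by
  rw [List.pairwise_iff_getElem]
  intro i j hi hj hij
  left
  simp only [List.getElem_zip, List.getElem_range']
  omega

theorem standard_iff {I : Sentence A} (ρ vals : List ℕ) (hX : XX I ρ)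
    (hl : ρ.length = vals.length) (hs : (ρ.zip vals).Pairwise RR) :
    IsStandardF (fill I.length (ρ.zip vals)) ↔ vals = List.range' 1 ρ.length := by
  have hp := fill_flatten_perm I.length _ (zip_lt (vals := vals) (XX_lt hX))
  rw [List.map_snd_zip (by omega)] at hp
  have hn : nBoxes (fill I.length (ρ.zip vals)) = ρ.length := by
    rw [nBoxes, hp.length_eq, hl]
  unfold IsStandardF
  rw [hn]
  constructor
  · intro h
    refine List.Perm.eq_of_pairwise (le := (· ≤ ·)) (fun a b _ _ => le_antisymm)
      (vals_sorted hl hs) ?_ (hp.symm.trans h)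
    exact (List.pairwise_lt_range' (s := 1)).imp (fun h => h.le)
  · intro h
    rw [← h]; exact hp

theorem mem_rowK (L : List (ℕ × ℕ)) (k v : ℕ) : v ∈ rowK L k ↔ (k, v) ∈ L := by
  rw [← List.count_pos_iff, count_rowK, List.count_pos_iff]

theorem coA_fill [Inhabited A] {I : Sentence A} (ρ : List ℕ) (hX : XX I ρ) :
    coA I (fill I.length (ρ.zip (List.range' 1 ρ.length))) = spl (ρ.zip (rd (wordsOf I) ρ)) := by
  set vals := List.range' 1 ρ.length with hvals
  have hl : ρ.length = vals.length := by simp [hvals]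
  set L := ρ.zip vals with hL
  set f := fill I.length L with hf
  have hlt := zip_lt (vals := vals) (XX_lt hX)
  have hp := fill_flatten_perm I.length _ hlt
  rw [List.map_snd_zip (by omega)] at hp
  have hn : nBoxes f = ρ.length := by rw [nBoxes, hf, hp.length_eq, hl]
  have hmemL : ∀ k i, (k, i + 1) ∈ L → ∃ h : i < ρ.length, ρ[i] = k := by
    intro k i h
    obtain ⟨i', hi', e⟩ := List.getElem_of_mem h
    have hi'' : i' < ρ.length := by simp [hL, ← hl] at hi'; exact hi'
    simp [hL, hvals] at e
    have : i' = i := by omega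
    subst this
    exact ⟨hi'', e.1⟩
  have hnd : ∀ k, (rowK L k).Nodup := by
    intro k
    have h1 : (rowK L k).Sublist vals := by
      have : vals = L.map Prod.snd := by rw [hL, List.map_snd_zip (by omega)]
      rw [this]
      exact (List.filter_sublist).map _
    exact h1.nodup (by rw [hvals]; exact List.nodup_range')
  have hrow : ∀ i (hi : i < ρ.length), rowOf f (i + 1) = ρ[i] := by
    intro i hi
    have hk : ρ[i] < I.length := XX_lt hX _ (List.getElem_mem hi)
    have hin : (ρ[i], i + 1) ∈ L := by
      rw [List.mem_iff_getElem]
      refine ⟨i, by simp [hL, ← hl, hi], ?_⟩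
      simp [hL, hvals]; omega
    unfold rowOf
    rw [List.findIdx_eq (by simp [hf, fill, hk])]
    constructor
    · simp [hf, fill, mem_rowK, hin]
    · intro j hj
      simp only [hf, fill, List.getElem_map, List.getElem_range]
      rw [Bool.eq_false_iff]
      intro hc
      rw [List.contains_iff_mem, mem_rowK] at hc
      obtain ⟨_, e⟩ := hmemL _ _ hc
      omega
  have hcol : ∀ i (hi : i < ρ.length), colorOf I f (i + 1) = (rd (wordsOf I) ρ)[i]'(by simpa using hi) := by
    intro i hi
    unfold colorOf
    rw [hrow i hi, hf, fill_getD _ _ hlt]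
    have hin : ((rd (wordsOf I) ρ)[i]'(by simpa using hi), i + 1) ∈
        (wordsOf I ρ[i]).zip (rowK L ρ[i]) := by
      rw [hL, ← T_row ρ[i] ρ (wordsOf I) vals hX.1 hl, List.mem_map]
      refine ⟨(ρ[i], ((rd (wordsOf I) ρ)[i]'(by simpa using hi), i + 1)), ?_, rfl⟩
      rw [List.mem_filter]
      refine ⟨?_, by simp⟩
      rw [List.mem_iff_getElem]
      refine ⟨i, by simp [← hl, hi], ?_⟩
      simp [hvals]; omega
    obtain ⟨j, hj, e⟩ := List.getElem_of_mem hin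
    simp only [List.length_zip, lt_inf_iff] at hj
    simp only [List.getElem_zip, Prod.mk.injEq] at e
    have hfi : (rowK L ρ[i]).findIdx (fun x => x == i + 1) = j := by
      rw [List.findIdx_eq hj.2]
      refine ⟨by simp [e.2], ?_⟩
      intro j' hj'
      rw [Bool.eq_false_iff]
      intro hc
      rw [beq_iff_eq, ← e.2] at hc
      have := ((hnd ρ[i]).getElem_inj_iff (hi := by omega) (hj := hj.2)).1 hc
      omega
    rw [hfi, ← e.1]
    change (wordsOf I ρ[i]).getD j default = _
    simp [hj.1]
  rw [coA_eq_spl, hn]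
  congr 2
  · apply List.ext_getElem
    · simp
    · intro i h1 h2
      simp only [List.getElem_map, List.getElem_range', Nat.one_mul]
      rw [Nat.add_comm 1 i, hrow i h2]
  · apply List.ext_getElem
    · simp [readWord, hn]
    · intro i h1 h2
      simp only [readWord, List.getElem_map, List.getElem_range]
      exact hcol i (by simpa using h2)

/-! ### Counting -/

theorem bij_standard [Inhabited A] {I : Sentence A} (hI : IsSentence I) (K : Sentence A) :
    LJC I K = Set.ncard {ρ | XX I ρ ∧ spl (ρ.zip (rd (wordsOf I) ρ)) = K} := by
  unfold LJC
  symm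
  apply Set.BijOn.ncard_eq (f := fun ρ : List ℕ => fill I.length (ρ.zip (List.range' 1 ρ.length)))
  have hl : ∀ ρ : List ℕ, ρ.length = (List.range' 1 ρ.length).length := by simp
  have hsum : ∀ ρ, XX I ρ → (nBoxes (fill I.length (ρ.zip (List.range' 1 ρ.length)))) = ρ.length := by
    intro ρ hX
    have hp := fill_flatten_perm I.length _ (zip_lt (vals := List.range' 1 ρ.length) (XX_lt hX))
    rw [nBoxes, hp.length_eq]; simp
  refine ⟨?_, ?_, ?_⟩
  · rintro ρ ⟨hX, hK⟩
    refine ⟨fill_isCIT hI _ _ hX (hl ρ) (range'_sorted_zip _ _ _) ?_, ?_, ?_⟩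
    · intro x hx; rw [List.mem_range'_1] at hx; omega
    · rw [standard_iff _ _ hX (hl ρ) (range'_sorted_zip _ _ _)]
    · rw [coA_fill ρ hX, hK]
  · rintro ρ ⟨hX, _⟩ ρ' ⟨hX', _⟩ h
    have hlen : ρ.length = ρ'.length := by
      rw [← hsum ρ hX, ← hsum ρ' hX']; exact congrArg nBoxes h
    have := fill_inj I.length _ _ (zip_lt (XX_lt hX)) (zip_lt (XX_lt hX'))
      (range'_sorted_zip _ _ _) (range'_sorted_zip _ _ _) h
    have := congrArg (List.map Prod.fst) this
    rwa [List.map_fst_zip (by simp), List.map_fst_zip (by simp)] at this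
  · rintro f ⟨hf, hst, hco⟩
    obtain ⟨ρ, vals, hX, hlv, hs, hv, rfl⟩ := exists_of_isCIT hI f hf
    rw [standard_iff _ _ hX hlv hs] at hst
    subst hst
    exact ⟨ρ, ⟨hX, by rw [← coA_fill ρ hX, hco]⟩, rfl⟩

theorem bij_mono [Inhabited A] {I : Sentence A} (hI : IsSentence I) (m : Mono A)
    (hm : ValidMono m) :
    Set.ncard {f : Filling | IsCIT I f ∧ monoOf I f = m} =
      Set.ncard {ρ | XX I ρ ∧ Refines m.1 (spl (ρ.zip (rd (wordsOf I) ρ)))} := by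
  symm
  have hex : ∀ x ∈ exV m.1 m.2, 1 ≤ x := fun x hx => hm.2.2.1 x (mem_exV _ _ _ hx)
  have key : ∀ ρ, XX I ρ → (Refines m.1 (spl (ρ.zip (rd (wordsOf I) ρ))) ↔
      rd (wordsOf I) ρ = m.1.flatten ∧ (ρ.zip (exV m.1 m.2)).Pairwise RR) := by
    intro ρ _
    rw [refines_spl ρ _ m.1 m.2 (by simp) hm, List.isChain_iff_pairwise]
  have hlen : ∀ ρ, rd (wordsOf I) ρ = m.1.flatten → ρ.length = (exV m.1 m.2).length := by
    intro ρ h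
    rw [length_exV _ _ hm.1, ← h]; simp
  apply Set.BijOn.ncard_eq (f := fun ρ : List ℕ => fill I.length (ρ.zip (exV m.1 m.2)))
  refine ⟨?_, ?_, ?_⟩
  · rintro ρ ⟨hX, hR⟩
    rw [key ρ hX] at hR
    have hl := hlen ρ hR.1
    exact ⟨fill_isCIT hI _ _ hX hl hR.2 hex,
      (monoOf_fill_iff _ _ hX hl hR.2 hex m hm).2 ⟨hR.1, rfl⟩⟩
  · rintro ρ ⟨hX, hR⟩ ρ' ⟨hX', hR'⟩ h
    rw [key ρ hX] at hR
    rw [key ρ' hX'] at hR'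
    have := fill_inj I.length _ _ (zip_lt (XX_lt hX)) (zip_lt (XX_lt hX')) hR.2 hR'.2 h
    have := congrArg (List.map Prod.fst) this
    rwa [List.map_fst_zip (hlen ρ hR.1).le, List.map_fst_zip (hlen ρ' hR'.1).le] at this
  · rintro f ⟨hf, hmo⟩
    obtain ⟨ρ, vals, hX, hlv, hs, hv, rfl⟩ := exists_of_isCIT hI f hf
    rw [monoOf_fill_iff _ _ hX hlv hs hv m hm] at hmo
    obtain ⟨h1, rfl⟩ := hmo
    exact ⟨ρ, ⟨hX, (key ρ hX).2 ⟨h1, hs⟩⟩, rfl⟩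

end ColoredImm

namespace ColoredImm
universe u
variable {A : Type u}

/-! ### Triangularity -/

/-- Restricted growth condition. -/
def Good : ℕ → List ℕ → Prop
  | _, [] => True
  | m, k :: ρ => k ≤ m ∧ Good (max m (k + 1)) ρ

theorem good_of_idx (ρ : List ℕ) : ∀ m,
    (∀ k, m ≤ k → k + 1 ∈ ρ → ρ.idxOf k < ρ.idxOf (k + 1)) → Good m ρ := by
  induction ρ with
  | nil => intro m _; trivial
  | cons a ρ ih =>
    intro m h
    refine ⟨?_, ih _ ?_⟩
    · by_contra hlt
      have := h (a - 1) (by omega) (by rw [show a - 1 + 1 = a by omega]; simp)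
      rw [show a - 1 + 1 = a by omega, List.idxOf_cons_self] at this
      omega
    · intro k hk hmem
      have := h k (by omega) (List.mem_cons_of_mem _ hmem)
      rw [List.idxOf_cons_ne _ (by omega), List.idxOf_cons_ne _ (by omega)] at this
      omega

/-- Each letter is replaced by the index of its word. -/
def rep : ℕ → Sentence A → List ℕ
  | _, [] => []
  | c, w :: K => List.replicate w.length c ++ rep (c + 1) K

theorem rep_addL (c : ℕ) (b : Bool) (a : A) (K : Sentence A) (hK : K ≠ []) :
    rep c (addL b a K) = c :: (if b then rep (c + 1) K else rep c K) := by
  cases K with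
  | nil => exact absurd rfl hK
  | cons w K =>
    rw [addL_cons]
    split <;> simp [rep, List.replicate_succ]

theorem le_rep (ρ : List ℕ) : ∀ (k m c : ℕ) (w : List A), (k :: ρ).length = w.length →
    Good m (k :: ρ) → k ≤ c → m ≤ c + 1 →
    List.Forall₂ (· ≤ ·) (k :: ρ) (rep c (spl ((k :: ρ).zip w))) := by
  induction ρ with
  | nil =>
    intro k m c w hl _ hk _
    obtain ⟨a, rfl⟩ := List.length_eq_one_iff.1 (by simpa using hl.symm : w.length = 1)
    simp [spl, rep, hk]
  | cons y ρ ih =>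
    intro k m c w hl hg hk hm
    obtain ⟨a, w, rfl⟩ := List.exists_cons_of_length_eq_add_one (n := ρ.length + 1)
      (by simpa using hl.symm : w.length = ρ.length + 1 + 1)
    have hl' : (y :: ρ).length = w.length := by simpa using hl
    obtain ⟨b, w, rfl⟩ := List.exists_cons_of_length_eq_add_one (n := ρ.length)
      (by simpa using hl'.symm : w.length = ρ.length + 1)
    obtain ⟨_, hg'⟩ := hg
    have hy := hg'.1
    have hs : spl ((k :: y :: ρ).zip (a :: b :: w)) =
      addL (decide (k < y)) a (spl ((y :: ρ).zip (b :: w))) := by simp [spl]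
    rw [hs, rep_addL _ _ _ _ (by rw [List.zip_cons_cons]; exact spl_cons_ne_nil _ _)]
    refine List.Forall₂.cons hk ?_
    by_cases h : k < y
    · simp only [h, decide_true, if_true]
      exact ih y _ (c + 1) (b :: w) hl' hg' (by omega) (by omega)
    · simp only [h, decide_false, Bool.false_eq_true, if_false]
      exact ih y _ c (b :: w) hl' hg' (by omega) (by omega)

theorem forall₂_sum {l l' : List ℕ} (h : List.Forall₂ (· ≤ ·) l l') :
    l.sum ≤ l'.sum ∧ (l.sum = l'.sum → l = l') := by
  induction h with
  | nil => simp
  | cons hab _ ih =>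
    simp only [List.sum_cons]
    refine ⟨by omega, fun h => ?_⟩
    rw [ih.2 (by omega)]
    congr 1
    omega

theorem rep_ge (K : Sentence A) : ∀ c, ∀ x ∈ rep c K, c ≤ x := by
  induction K with
  | nil => simp [rep]
  | cons w K ih =>
    intro c x hx
    simp only [rep, List.mem_append, List.mem_replicate] at hx
    rcases hx with hx | hx
    · omega
    · have := ih _ x hx; omega

theorem rep_lt (K : Sentence A) : ∀ c, ∀ x ∈ rep c K, x < c + K.length := by
  induction K with
  | nil => simp [rep]
  | cons w K ih =>
    intro c x hx
    simp only [rep, List.mem_append, List.mem_replicate] at hx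
    rw [List.length_cons]
    rcases hx with hx | hx
    · omega
    · have := ih _ x hx; omega

theorem rep_sorted (K : Sentence A) : ∀ c, (rep c K).Pairwise (· ≤ ·) := by
  induction K with
  | nil => simp [rep]
  | cons w K ih =>
    intro c
    rw [rep, List.pairwise_append]
    refine ⟨List.pairwise_replicate.2 (by simp), ih _, ?_⟩
    intro a ha b hb
    have := rep_ge K _ b hb
    have := (List.mem_replicate.1 ha).2
    omega

theorem rep_length (K : Sentence A) : ∀ c, (rep c K).length = K.flatten.length := by
  induction K with
  | nil => simp [rep]
  | cons w K ih => intro c; simp [rep, ih]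

theorem rep_count (K : Sentence A) : ∀ c k, (rep c K).count (c + k) = (K.getD k []).length := by
  induction K with
  | nil => simp [rep]
  | cons w K ih =>
    intro c k
    rw [rep, List.count_append]
    cases k with
    | zero =>
      have : (rep (c + 1) K).count c = 0 := by
        rw [List.count_eq_zero]
        intro h; have := rep_ge K _ _ h; omega
      simp [this]
    | succ k =>
      rw [show c + (k + 1) = c + 1 + k by omega, ih]
      have : (List.replicate w.length c).count (c + 1 + k) = 0 := by
        rw [List.count_eq_zero]
        intro h; have := (List.mem_replicate.1 h).2; omega
      simp [this]

theorem XX_perm {I : Sentence A} {ρ : List ℕ} (h : XX I ρ) : ρ.Perm (rep 0 I) := by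
  rw [List.perm_iff_count]
  intro k
  have := rep_count I 0 k
  rw [Nat.zero_add] at this
  rw [this, h.1 k]; rfl

theorem XX_rep {I : Sentence A} (hI : IsSentence I) : XX I (rep 0 I) := by
  have hc : ∀ k, (rep 0 I).count k = (wordsOf I k).length := by
    intro k
    have := rep_count I 0 k
    rwa [Nat.zero_add] at this
  refine ⟨hc, ?_⟩
  intro k hk
  have hk1 := rep_lt I 0 _ hk
  have hk0 : k ∈ rep 0 I := XX_mem hI hc k (by omega)
  have i1 := List.idxOf_lt_length_iff.2 hk0
  have i2 := List.idxOf_lt_length_iff.2 hk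
  have e1 : (rep 0 I)[(rep 0 I).idxOf k] = k := List.getElem_idxOf i1
  have e2 : (rep 0 I)[(rep 0 I).idxOf (k + 1)] = k + 1 := List.getElem_idxOf i2
  rcases lt_trichotomy ((rep 0 I).idxOf k) ((rep 0 I).idxOf (k + 1)) with h | h | h
  · exact h
  · exfalso
    have e3 : (rep 0 I)[(rep 0 I).idxOf k] = (rep 0 I)[(rep 0 I).idxOf (k + 1)] := by simp only [h]
    omega
  · exfalso
    have := (List.pairwise_iff_getElem.1 (rep_sorted I 0)) _ _ i2 i1 h
    omega

theorem rd_replicate [Inhabited A] (c : ℕ) (σ : List ℕ) (w : List A) : ∀ g : ℕ → List A, g c = w →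
    rd g (List.replicate w.length c ++ σ) = w ++ rd (Function.update g c []) σ := by
  induction w with
  | nil =>
    intro g hg
    have : Function.update g c [] = g := by rw [← hg, Function.update_eq_self]
    simp [this]
  | cons a w ih =>
    intro g hg
    have := ih (Function.update g c w) (by simp)
    simp only [List.length_cons, List.replicate_succ, List.cons_append, rd, hg, List.headD_cons,
      List.tail_cons, this]
    simp

theorem rd_rep [Inhabited A] (I : Sentence A) : ∀ (c : ℕ) (g : ℕ → List A),
    (∀ k, g (c + k) = I.getD k []) → rd g (rep c I) = I.flatten := by
  induction I with
  | nil => intro c g _; simp [rep, rd]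
  | cons w I ih =>
    intro c g h
    have h0 : g c = w := by simpa using h 0
    rw [rep, rd_replicate c _ w g h0, ih (c + 1), List.flatten_cons]
    intro k
    have := h (k + 1)
    rw [Function.update_of_ne (by omega), show c + 1 + k = c + (k + 1) by omega, this]
    simp

theorem spl_rep (I : Sentence A) : ∀ c, IsSentence I → spl ((rep c I).zip I.flatten) = I := by
  induction I with
  | nil => simp [rep, spl]
  | cons w I ih =>
    intro c hI
    have hI' : IsSentence I := fun x hx => hI x (by simp [hx])
    have ih' := ih (c + 1) hI'
    have hw : w ≠ [] := hI w (by simp)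
    clear ih hI
    induction w with
    | nil => exact absurd rfl hw
    | cons a u ihu =>
      cases u with
      | nil =>
        cases I with
        | nil => simp [rep, spl]
        | cons w' I =>
          obtain ⟨b, u', rfl⟩ := List.exists_cons_of_ne_nil (hI' w' (by simp))
          simp only [rep, List.length_cons, List.replicate_succ, List.cons_append,
            List.flatten_cons, List.zip_cons_cons, List.length_nil, List.replicate_zero,
            List.nil_append, spl] at ih' ⊢
          rw [ih']
          simp [addL]
      | cons b u =>
        have := ihu (by simp)
        simp only [rep, List.length_cons, List.replicate_succ, List.cons_append,
            List.flatten_cons, List.zip_cons_cons, spl] at this ⊢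
        rw [this]
        simp [addL]

/-- The descent sentence attached to a word of rows. -/
def cc [Inhabited A] (I : Sentence A) (ρ : List ℕ) : Sentence A := spl (ρ.zip (rd (wordsOf I) ρ))

theorem cc_rep [Inhabited A] {I : Sentence A} (hI : IsSentence I) : cc I (rep 0 I) = I := by
  unfold cc
  rw [rd_rep I 0 (wordsOf I) (fun k => by simp [wordsOf]), spl_rep I 0 hI]

theorem cc_length [Inhabited A] {I : Sentence A} {ρ : List ℕ} (h : XX I ρ) :
    (cc I ρ).flatten.length = I.flatten.length := by
  rw [cc, spl_flatten, ← rep_length I 0, ← (XX_perm h).length_eq]; simp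

theorem cc_isSentence [Inhabited A] (I : Sentence A) (ρ : List ℕ) : IsSentence (cc I ρ) :=
  spl_isSentence _

theorem cc_weight [Inhabited A] {I : Sentence A} {ρ : List ℕ} (h : XX I ρ) :
    (rep 0 I).sum ≤ (rep 0 (cc I ρ)).sum ∧
      ((rep 0 I).sum = (rep 0 (cc I ρ)).sum → ρ = rep 0 I) := by
  have hf : List.Forall₂ (· ≤ ·) ρ (rep 0 (cc I ρ)) := by
    have hg : Good 0 ρ := good_of_idx ρ 0 (fun k _ => h.2 k)
    cases ρ with
    | nil => simp [cc, spl, rep]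
    | cons k ρ => exact le_rep ρ k 0 0 _ (by simp) hg hg.1 (by omega)
  have hs := forall₂_sum hf
  rw [(XX_perm h).sum_eq] at hs
  refine ⟨hs.1, fun e => ?_⟩
  have e' := hs.2 e
  refine List.Perm.eq_of_pairwise (le := (· ≤ ·)) (fun a b _ _ => le_antisymm) ?_
    (rep_sorted I 0) (XX_perm h)
  rw [e']; exact rep_sorted _ _

theorem rep_sum_le {K : Sentence A} (hK : IsSentence K) :
    (rep 0 K).sum ≤ K.flatten.length * K.flatten.length := by
  have hlen : K.length ≤ K.flatten.length := by
    induction K with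
    | nil => simp
    | cons w K ih =>
      have h1 := ih (fun x hx => hK x (by simp [hx]))
      have h2 := List.length_pos_iff.2 (hK w (by simp))
      simp only [List.length_cons, List.flatten_cons, List.length_append]; omega
  have := List.sum_le_card_nsmul (rep 0 K) K.flatten.length (by
    intro x hx; have := rep_lt K 0 x hx; omega)
  rwa [rep_length, smul_eq_mul] at this

theorem XX_finite (I : Sentence A) : {ρ | XX I ρ}.Finite := by
  apply Set.Finite.subset ((rep 0 I).permutations.toFinset.finite_toSet)
  intro ρ h
  simp only [List.coe_toFinset, Set.mem_setOf_eq, List.mem_permutations]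
  exact XX_perm h

/-! ### Evaluating the fundamental functions -/

theorem finite_sentences (w : List A) : {J : Sentence A | IsSentence J ∧ J.flatten = w}.Finite := by
  induction w with
  | nil =>
    apply Set.Finite.subset (Set.finite_singleton ([] : Sentence A))
    rintro J ⟨h1, h2⟩
    exact flatten_eq_nil_of_sentence h1 h2
  | cons a w ih =>
    apply Set.Finite.subset ((ih.image (addL true a)).union
      ((ih.image (addL false a))))
    rintro J ⟨h1, h2⟩
    cases J with
    | nil => simp at h2
    | cons v J =>
      obtain ⟨b, u, rfl⟩ := List.exists_cons_of_ne_nil (h1 v (by simp))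
      simp at h2
      obtain ⟨rfl, h2⟩ := h2
      have hJ : IsSentence J := fun x hx => h1 x (by simp [hx])
      by_cases hu : u = []
      · subst hu
        left
        refine ⟨J, ⟨hJ, by simpa using h2⟩, ?_⟩
        cases J with
        | nil => simp [addL]
        | cons v J => simp [addL]
      · right
        refine ⟨u :: J, ⟨?_, by simpa using h2⟩, by simp [addL]⟩
        intro x hx
        rcases List.mem_cons.1 hx with rfl | hx
        · exact hu
        · exact hJ x hx

open Classical in
theorem FQ_apply (K : Sentence A) (m : Mono A) :
    FQ K m = if ValidMono m ∧ Refines m.1 K then 1 else 0 := by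
  have hfin : ({J : Sentence A | Refines J K} ∩ Function.support (MQ (A := A))).Finite := by
    apply Set.Finite.subset (finite_sentences K.flatten)
    rintro J ⟨h1, h2⟩
    refine ⟨?_, refines_flatten h1⟩
    rw [Function.mem_support, Function.ne_iff] at h2
    obtain ⟨m, hm⟩ := h2
    simp only [MQ, Pi.zero_apply, ne_eq, ite_eq_right_iff, one_ne_zero, imp_false, not_not] at hm
    rw [← hm.1]
    exact hm.2.2.2.2
  have h := AddMonoidHom.map_finsum_mem' (Pi.evalAddMonoidHom (fun _ : Mono A => ℚ) m) hfin
  simp only [Pi.evalAddMonoidHom_apply] at h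
  unfold FQ
  rw [h, finsum_eq_single _ m.1]
  · by_cases hr : Refines m.1 K
    · simp [hr, MQ]
    · simp [hr]
  · intro J hJ
    have : MQ J m = 0 := by simp [MQ, Ne.symm hJ]
    simp [this]

theorem dualImm_eq [Inhabited A] {I : Sentence A} (hI : IsSentence I) :
    dualImm I = ∑ ρ ∈ (XX_finite I).toFinset, FQ (cc I ρ) := by
  classical
  funext m
  rw [Finset.sum_apply]
  simp only [FQ_apply]
  unfold dualImm
  by_cases hm : ValidMono m
  · rw [bij_mono hI m hm]
    simp only [hm, true_and]
    rw [Finset.sum_boole, ← Set.ncard_coe_finset]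
    congr 2
    ext ρ
    rw [Finset.mem_coe, Finset.mem_filter, Set.Finite.mem_toFinset]
    exact Iff.rfl
  · have : {f : Filling | IsCIT I f ∧ monoOf I f = m} = ∅ := by
      ext f
      simp only [Set.mem_setOf_eq, Set.mem_empty_iff_false, iff_false]
      rintro ⟨_, rfl⟩
      exact hm (monoOf_valid I f)
    simp [this, hm]

theorem LJC_eq [Inhabited A] [DecidableEq (Sentence A)] {I : Sentence A} (hI : IsSentence I)
    (K : Sentence A) :
    LJC I K = ((XX_finite I).toFinset.filter (fun ρ => cc I ρ = K)).card := by
  rw [bij_standard hI, ← Set.ncard_coe_finset]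
  congr 1
  ext ρ
  rw [Finset.mem_coe, Finset.mem_filter, Set.Finite.mem_toFinset]
  exact Iff.rfl

theorem LJC_self [Inhabited A] {I : Sentence A} (hI : IsSentence I) : LJC I I = 1 := by
  classical
  rw [LJC_eq hI, Finset.card_eq_one]
  refine ⟨rep 0 I, ?_⟩
  ext ρ
  simp only [Finset.mem_filter, Set.Finite.mem_toFinset, Set.mem_setOf_eq, Finset.mem_singleton]
  constructor
  · rintro ⟨h, e⟩
    exact (cc_weight h).2 (by rw [e])
  · rintro rfl
    exact ⟨XX_rep hI, cc_rep hI⟩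

/-- The out-neighbours of a sentence. -/
theorem exists_edges [Inhabited A] {I : Sentence A} (hI : IsSentence I) :
    ∃ S : Finset (Sentence A), (∀ J, J ∈ S ↔ IsEdge I J) ∧
      (∀ J ∈ S, IsSentence J ∧ J.flatten.length = I.flatten.length ∧
        (rep 0 I).sum < (rep 0 J).sum) ∧
      FQ I = dualImm I - ∑ J ∈ S, (LJC I J : ℚ) • FQ J := by
  classical
  set X := (XX_finite I).toFinset with hX
  have hmem : ∀ ρ, ρ ∈ X ↔ XX I ρ := by simp [hX]
  have hIm : I ∈ X.image (cc I) := Finset.mem_image.2 ⟨rep 0 I, (hmem _).2 (XX_rep hI), cc_rep hI⟩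
  refine ⟨(X.image (cc I)).erase I, ?_, ?_, ?_⟩
  · intro J
    rw [Finset.mem_erase]
    unfold IsEdge
    rw [LJC_eq hI, Finset.card_ne_zero, Finset.filter_nonempty_iff, Finset.mem_image]
  · intro J hJ
    rw [Finset.mem_erase, Finset.mem_image] at hJ
    obtain ⟨hne, ρ, hρ, rfl⟩ := hJ
    rw [hmem] at hρ
    refine ⟨cc_isSentence I ρ, cc_length hρ, lt_of_le_of_ne (cc_weight hρ).1 ?_⟩
    intro e
    have := (cc_weight hρ).2 e
    exact hne (by rw [this, cc_rep hI])
  · have h1 : dualImm I = ∑ J ∈ X.image (cc I), (LJC I J : ℚ) • FQ J := by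
      rw [dualImm_eq hI, ← hX,
        ← Finset.sum_fiberwise_of_maps_to (fun ρ hρ => Finset.mem_image_of_mem (cc I) hρ)]
      apply Finset.sum_congr rfl
      intro J _
      rw [LJC_eq hI, ← hX, Finset.sum_congr rfl (g := fun _ => FQ J)]
      · rw [Finset.sum_const, Nat.cast_smul_eq_nsmul]
      · intro ρ hρ
        rw [(Finset.mem_filter.1 hρ).2]
    rw [h1, ← Finset.add_sum_erase _ _ hIm, LJC_self hI]
    simp

/-! ### Path inversion -/

theorem pathWeight_cons [Inhabited A] (I J : Sentence A) (q : List (Sentence A)) :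
    pathWeight (I :: J :: q) = -(LJC I J : ℚ) * pathWeight (J :: q) := by
  unfold pathWeight
  simp only [List.length_cons, Nat.add_sub_cancel, List.tail_cons, List.zip_cons_cons,
    List.map_cons, List.prod_cons, pow_succ]
  ring

theorem main_paths [Inhabited A] : ∀ (d : ℕ) (I : Sentence A), IsSentence I →
    I.flatten.length * I.flatten.length - (rep 0 I).sum ≤ d →
    ∃ P : Finset (List (Sentence A)),
      (∀ p, p ∈ P ↔ (p.head? = some I ∧ p.IsChain IsEdge)) ∧
      FQ I = ∑ p ∈ P, pathWeight p • dualImm (p.getLastD []) := by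
  classical
  intro d
  induction d with
  | zero =>
    intro I hI hd
    obtain ⟨S, hS, hS2, hF⟩ := exists_edges hI
    have hemp : S = ∅ := by
      rw [Finset.eq_empty_iff_forall_notMem]
      intro J hJ
      obtain ⟨h1, h2, h3⟩ := hS2 J hJ
      have := rep_sum_le h1
      rw [h2] at this
      omega
    subst hemp
    refine ⟨{[I]}, ?_, ?_⟩
    · intro p
      rw [Finset.mem_singleton]
      constructor
      · rintro rfl; simp
      · rintro ⟨h1, h2⟩
        cases p with
        | nil => simp at h1
        | cons a p =>
          simp at h1; subst h1
          cases p with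
          | nil => rfl
          | cons b p =>
            rw [List.isChain_cons_cons] at h2
            have := (hS b).2 h2.1
            simp at this
    · rw [hF]; simp [pathWeight]
  | succ d ih =>
    intro I hI hd
    obtain ⟨S, hS, hS2, hF⟩ := exists_edges hI
    have hex : ∀ J, ∃ P : Finset (List (Sentence A)), J ∈ S →
      (∀ p, p ∈ P ↔ (p.head? = some J ∧ p.IsChain IsEdge)) ∧
      FQ J = ∑ p ∈ P, pathWeight p • dualImm (p.getLastD []) := by
      intro J
      by_cases hJ : J ∈ S
      · obtain ⟨h1, h2, h3⟩ := hS2 J hJ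
        obtain ⟨P, hP⟩ := ih J h1 (by
          have := rep_sum_le h1
          rw [h2] at this ⊢
          omega)
        exact ⟨P, fun _ => hP⟩
      · exact ⟨∅, fun h => absurd h hJ⟩
    choose PP hPP using hex
    refine ⟨insert [I] (S.biUnion (fun J => (PP J).image (List.cons I))), ?_, ?_⟩
    · intro p
      simp only [Finset.mem_insert, Finset.mem_biUnion, Finset.mem_image]
      constructor
      · rintro (rfl | ⟨J, hJ, q, hq, rfl⟩)
        · simp
        · rw [(hPP J hJ).1] at hq
          cases q with
          | nil => simp at hq
          | cons b q =>
            obtain ⟨h1, h2⟩ := hq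
            simp at h1; subst h1
            exact ⟨by simp, List.isChain_cons_cons.2 ⟨(hS b).1 hJ, h2⟩⟩
      · rintro ⟨h1, h2⟩
        cases p with
        | nil => simp at h1
        | cons a p =>
          simp at h1; subst h1
          cases p with
          | nil => left; rfl
          | cons b p =>
            rw [List.isChain_cons_cons] at h2
            have hb := (hS b).2 h2.1
            right
            exact ⟨b, hb, b :: p, ((hPP b hb).1 _).2 ⟨by simp, h2.2⟩, rfl⟩
    · rw [Finset.sum_insert, Finset.sum_biUnion]
      · rw [hF]
        have h0 : pathWeight [I] • dualImm ([I].getLastD []) = dualImm I := by simp [pathWeight]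
        rw [h0, sub_eq_add_neg, ← Finset.sum_neg_distrib]
        congr 1
        apply Finset.sum_congr rfl
        intro J hJ
        rw [Finset.sum_image (fun a _ b _ h => (List.cons.inj h).2)]
        rw [(hPP J hJ).2, Finset.smul_sum, ← Finset.sum_neg_distrib]
        apply Finset.sum_congr rfl
        intro q hq
        rw [(hPP J hJ).1] at hq
        cases q with
        | nil => simp at hq
        | cons b q =>
          obtain ⟨h1, _⟩ := hq
          simp at h1; subst h1
          rw [pathWeight_cons, smul_smul, neg_mul, neg_smul]
          simp
      · intro J hJ J' hJ' hne
        rw [Function.onFun, Finset.disjoint_left]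
        intro p hp hp'
        rw [Finset.mem_image] at hp hp'
        obtain ⟨q, hq, rfl⟩ := hp
        obtain ⟨q', hq', e⟩ := hp'
        have e' := (List.cons.inj e).2
        subst e'
        rw [(hPP J hJ).1] at hq
        rw [(hPP J' hJ').1] at hq'
        exact hne (Option.some.inj (hq.1.symm.trans hq'.1))
      · simp only [Finset.mem_biUnion, Finset.mem_image, not_exists, not_and]
        intro J hJ q hq e
        rw [(hPP J hJ).1] at hq
        have := (List.cons.inj e).2
        subst this
        simp at hq

end ColoredImm

namespace ColoredImm

/-- For a sentence `I`, the colored fundamental function expands into the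
colored dual immaculate basis as `F_I = Σ_K L⁻¹_{I,K} 𝔖*_K`, summed over all sentences `K`
reachable from `I` in the colored immaculate descent graph, where
`L⁻¹_{I,K} = Σ_𝒫 (-1)^{ℓ(𝒫)} prod(𝒫)` over directed paths `𝒫` from `I` to `K`. -/
theorem statement7 {A : Type*} [Inhabited A] (I : Sentence A) (hI : IsSentence I) :
    FQ I = ∑ᶠ K ∈ {K : Sentence A | (PathsFromTo I K).Nonempty}, Linv I K • dualImm K := by
  classical
  obtain ⟨P, hP, hF⟩ := main_paths _ I hI le_rfl
  have hlast : ∀ p ∈ P, p.getLast? = some (p.getLastD []) := by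
    intro p hp
    rw [hP] at hp
    cases p with
    | nil => simp at hp
    | cons a p => simp [List.getLast?_cons]
  have hpaths : ∀ K, PathsFromTo I K = ↑(P.filter (fun p => p.getLastD [] = K)) := by
    intro K
    ext p
    simp only [PathsFromTo, Set.mem_setOf_eq, Finset.coe_filter]
    constructor
    · rintro ⟨h1, h2, h3⟩
      have hp : p ∈ P := (hP p).2 ⟨h1, h3⟩
      refine ⟨hp, ?_⟩
      rw [hlast p hp] at h2
      exact Option.some.inj h2
    · rintro ⟨hp, rfl⟩
      exact ⟨((hP p).1 hp).1, hlast p hp, ((hP p).1 hp).2⟩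
  have hreach : {K : Sentence A | (PathsFromTo I K).Nonempty} =
      ↑(P.image (fun p => p.getLastD [])) := by
    ext K
    rw [Set.mem_setOf_eq, hpaths, Finset.coe_nonempty, Finset.filter_nonempty_iff,
      Finset.mem_coe, Finset.mem_image]
  rw [hreach, finsum_mem_coe_finset, hF,
    ← Finset.sum_fiberwise_of_maps_to (fun p hp =>
      Finset.mem_image_of_mem (fun p : List (Sentence A) => p.getLastD []) hp)]
  apply Finset.sum_congr rfl
  intro K _
  unfold Linv
  rw [hpaths K, finsum_mem_coe_finset, Finset.sum_smul]
  apply Finset.sum_congr rfl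
  intro p hp
  rw [(Finset.mem_filter.1 hp).2]

end ColoredImm
end

section
/- For a composition α of n, the fundamental quasisymmetric function expands into the dual immaculate basis as F_α = Σ_β L^{-1}_{α,β} 𝔖*_β, where the sum runs over all compositions β reachable from α in the immaculate descent graph 𝔇^n, and L^{-1}_{α,β} = Σ_𝒫 (−1)^{ℓ(𝒫)} prod(𝒫), the sum running over all directed paths 𝒫 from α to β in 𝔇^n. -/
open scoped BigOperators

namespace ColoredImm

namespace Pf

open Uncolored

/-! ### Words and their descent compositions -/

/-- The sorted word with `b_i` copies of `t+i`. -/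
def word : ℕ → List ℕ → List ℕ
  | _, [] => []
  | t, b :: c => List.replicate b t ++ word (t + 1) c

/-- Increase the head. -/
def incH : List ℕ → List ℕ
  | [] => []
  | b :: c => (b + 1) :: c

/-- The ascent composition of a word. -/
def co : List ℕ → List ℕ
  | [] => []
  | [_] => [1]
  | r :: s :: u => if r < s then 1 :: co (s :: u) else incH (co (s :: u))

/-- The weight of a composition. -/
def wt : List ℕ → ℕ
  | [] => 0
  | _ :: c => wt c + c.sum

/-- Restricted growth. -/
def RG (u : List ℕ) : Prop := ∀ p r q, u = p ++ (r + 1) :: q → r ∈ p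

lemma co_cons (s : ℕ) (u : List ℕ) : ∃ b c, co (s :: u) = (b + 1) :: c := by
  induction u generalizing s with
  | nil => exact ⟨0, [], rfl⟩
  | cons s' u ih =>
    obtain ⟨b, c, h⟩ := ih s'
    unfold co
    split_ifs
    · exact ⟨0, _, rfl⟩
    · exact ⟨b + 1, c, by rw [h]; rfl⟩

lemma co_pos (u : List ℕ) : IsComposition (co u) := by
  induction u with
  | nil => simp [co, IsComposition]
  | cons s u ih =>
    cases u with
    | nil => simp [co, IsComposition]
    | cons s' u =>
      obtain ⟨b, c, h⟩ := co_cons s' u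
      unfold co
      rw [h] at ih ⊢
      split_ifs <;> simp [incH, IsComposition] at ih ⊢ <;> exact ih

lemma co_sum (u : List ℕ) : (co u).sum = u.length := by
  induction u with
  | nil => simp [co]
  | cons s u ih =>
    cases u with
    | nil => simp [co]
    | cons s' u =>
      obtain ⟨b, c, h⟩ := co_cons s' u
      unfold co
      rw [h] at ih ⊢
      split_ifs <;> simp [incH] at ih ⊢ <;> omega

lemma word_co_step (t r s : ℕ) (u : List ℕ) :
    word t (co (r :: s :: u)) = t :: word (if r < s then t + 1 else t) (co (s :: u)) := by
  obtain ⟨b, c, h⟩ := co_cons s u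
  rw [co]
  split_ifs
  · simp [word]
  · rw [h]; simp [word, incH, List.replicate_succ]

lemma word_sum (t : ℕ) (c : List ℕ) : (word t c).sum = t * c.sum + wt c := by
  induction c generalizing t with
  | nil => simp [word, wt]
  | cons b c ih => simp [word, wt, ih]; ring

lemma word_length (t : ℕ) (c : List ℕ) : (word t c).length = c.sum := by
  induction c generalizing t with
  | nil => simp [word]
  | cons b c ih => simp [word, ih]

lemma le_of_mem_word (t : ℕ) (c : List ℕ) : ∀ x ∈ word t c, t ≤ x := by
  induction c generalizing t with
  | nil => simp [word]
  | cons b c ih =>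
    intro x hx
    simp only [word, List.mem_append, List.mem_replicate] at hx
    rcases hx with hx | hx
    · omega
    · have := ih _ _ hx; omega

lemma lt_of_mem_word (t : ℕ) (c : List ℕ) : ∀ x ∈ word t c, x < t + c.length := by
  induction c generalizing t with
  | nil => simp [word]
  | cons b c ih =>
    intro x hx
    simp only [word, List.mem_append, List.mem_replicate, List.length_cons] at hx ⊢
    rcases hx with hx | hx
    · omega
    · have := ih _ _ hx; omega

lemma word_sorted (t : ℕ) (c : List ℕ) : (word t c).Pairwise (· ≤ ·) := by
  induction c generalizing t with
  | nil => simp [word]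
  | cons b c ih =>
    simp only [word, List.pairwise_append, List.pairwise_replicate]
    refine ⟨by simp, ih _, ?_⟩
    intro x hx y hy
    have := le_of_mem_word _ _ _ hy
    have := List.eq_of_mem_replicate hx
    omega

lemma count_word (r t : ℕ) (c : List ℕ) : (word t c).count (t + r) = c.getD r 0 := by
  induction c generalizing t r with
  | nil => simp [word]
  | cons b c ih =>
    simp only [word, List.count_append, List.count_replicate]
    cases r with
    | zero =>
      have : (word (t + 1) c).count (t + 0) = 0 := by
        rw [List.count_eq_zero]
        intro h
        have := le_of_mem_word _ _ _ h
        omega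
      rw [this]; simp
    | succ r =>
      have h1 := ih r (t + 1)
      rw [show t + 1 + r = t + (r + 1) by omega] at h1
      rw [h1]; simp

lemma co_word (t : ℕ) (c : List ℕ) (hc : IsComposition c) : co (word t c) = c := by
  induction c generalizing t with
  | nil => simp [word, co]
  | cons b c ih =>
    have hc' : IsComposition c := fun a ha => hc a (List.mem_cons_of_mem _ ha)
    have hb : 1 ≤ b := hc b (by simp)
    obtain ⟨b, rfl⟩ : ∃ b', b = b' + 1 := ⟨b - 1, by omega⟩
    clear hc hb
    simp only [word]
    have ih' := ih (t + 1) hc'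
    have base : co (t :: word (t + 1) c) = 1 :: c := by
      cases h : word (t + 1) c with
      | nil =>
        rw [h] at ih'
        rw [← ih']; simp [co]
      | cons s u =>
        have : t + 1 ≤ s := le_of_mem_word (t + 1) c s (by rw [h]; simp)
        rw [co, if_pos (by omega), ← h, ih']
    clear ih ih'
    induction b with
    | zero => simpa using base
    | succ b ihb =>
      rw [List.replicate_succ, List.replicate_succ, List.cons_append, List.cons_append, co,
        if_neg (lt_irrefl _)]
      rw [List.replicate_succ, List.cons_append] at ihb
      rw [ihb]; rfl

lemma RG_word (c : List ℕ) (hc : IsComposition c) : RG (word 0 c) := by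
  intro p r q h
  have hs := word_sorted 0 c
  have hm : r + 1 ∈ word 0 c := by rw [h]; simp
  have hlt := lt_of_mem_word _ _ _ hm
  have hr : r ∈ word 0 c := by
    rw [← List.count_pos_iff]
    have := count_word r 0 c
    rw [zero_add] at this
    rw [this]
    have hr' : r < c.length := by omega
    rw [List.getD_eq_getElem _ _ hr']
    exact hc _ (List.getElem_mem hr')
  rw [h] at hr hs
  simp only [List.mem_append, List.mem_cons] at hr
  rw [List.pairwise_append, List.pairwise_cons] at hs
  rcases hr with hr | hr | hr
  · exact hr
  · omega
  · have := hs.2.1.1 _ hr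
    omega

lemma le_word_aux (u : List ℕ) : ∀ (p : List ℕ) (s t : ℕ), RG (p ++ s :: u) →
    (∀ x ∈ p, x ≤ t) → s ≤ t → List.Forall₂ (· ≤ ·) (s :: u) (word t (co (s :: u))) := by
  induction u with
  | nil => intro p s t _ _ h; simpa [co, word] using h
  | cons s' u ih =>
    intro p s t hRG hp hs
    rw [word_co_step]
    refine List.Forall₂.cons hs ?_
    have hp' : ∀ x ∈ p ++ [s], x ≤ t := by
      intro x hx
      simp only [List.mem_append, List.mem_singleton] at hx
      rcases hx with hx | hx
      · exact hp x hx
      · omega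
    refine ih (p ++ [s]) s' _ (by simpa using hRG) ?_ ?_
    · intro x hx
      have := hp' x hx
      split_ifs <;> omega
    · split_ifs with h
      · have := hRG (p ++ [s]) (s' - 1) u (by
          rw [show s' - 1 + 1 = s' by omega]; simp)
        have := hp' _ this
        omega
      · omega

lemma le_word (u : List ℕ) (h : RG u) : List.Forall₂ (· ≤ ·) u (word 0 (co u)) := by
  cases u with
  | nil => simp [co, word]
  | cons s u =>
    refine le_word_aux u [] s 0 (by simpa using h) (by simp) ?_
    by_contra hs
    have := h [] (s - 1) u (by rw [show s - 1 + 1 = s by omega]; simp)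
    simp at this

lemma forall₂_sum (u v : List ℕ) (h : List.Forall₂ (· ≤ ·) u v) :
    u.sum ≤ v.sum ∧ (u.sum = v.sum → u = v) := by
  induction h with
  | nil => simp
  | cons h1 h2 ih =>
    simp only [List.sum_cons]
    refine ⟨by omega, fun h => ?_⟩
    rw [ih.2 (by omega)]
    congr 1
    omega

/-- The words encoding standard immaculate tableaux of shape `α`. -/
def US (α : List ℕ) : Set (List ℕ) := {u | u.Perm (word 0 α) ∧ RG u}

lemma wt_le {α u : List ℕ} (h : u ∈ US α) :
    wt α ≤ wt (co u) ∧ (wt α = wt (co u) → u = word 0 (co u)) := by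
  have h1 := forall₂_sum _ _ (le_word u h.2)
  rw [h.1.sum_eq, word_sum, word_sum] at h1
  simpa using h1

lemma eq_word {α u : List ℕ} (h : u ∈ US α) (hw : wt α = wt (co u)) : u = word 0 α := by
  have h1 := (wt_le h).2 hw
  refine List.Perm.eq_of_pairwise (le := (· ≤ ·)) (fun a b _ _ h1 h2 => le_antisymm h1 h2) ?_
    (word_sorted _ _) h.1
  rw [h1]; exact word_sorted _ _

lemma wt_lt {α u : List ℕ} (hα : IsComposition α) (h : u ∈ US α) (hne : co u ≠ α) :
    wt α < wt (co u) := by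
  refine lt_of_le_of_ne (wt_le h).1 fun hw => hne ?_
  rw [eq_word h hw, co_word _ _ hα]

lemma US_diag {α : List ℕ} (hα : IsComposition α) : {u | u ∈ US α ∧ co u = α} = {word 0 α} := by
  ext u
  simp only [Set.mem_setOf_eq, Set.mem_singleton_iff]
  constructor
  · rintro ⟨h, h2⟩
    exact eq_word h (by rw [h2])
  · rintro rfl
    exact ⟨⟨List.Perm.refl _, RG_word α hα⟩, co_word _ _ hα⟩

lemma US_finite (α : List ℕ) : (US α).Finite := by
  refine Set.Finite.subset (List.finite_toSet (word 0 α).permutations) ?_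
  intro u hu
  simpa using hu.1

lemma length_le_sum (α : List ℕ) (hα : IsComposition α) : α.length ≤ α.sum := by
  induction α with
  | nil => simp
  | cons b c ih =>
    have := ih (fun a ha => hα a (List.mem_cons_of_mem _ ha))
    have := hα b (by simp)
    simp; omega

lemma wt_bound (α : List ℕ) : wt α ≤ α.length * α.sum := by
  induction α with
  | nil => simp [wt]
  | cons b c ih => simp [wt]; nlinarith

end Pf

end ColoredImm

namespace ColoredImm

namespace Pf

open Uncolored

/-! ### Refinement -/

lemma refines_nil (a : List ℕ) : RefinesC a [] ↔ a = [] := by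
  constructor
  · rintro ⟨P, _, h2, h3⟩
    simp at h3
    subst h3
    simpa using h2.symm
  · rintro rfl
    exact ⟨[], by simp, rfl, rfl⟩

lemma refines_cons (a : List ℕ) (b : ℕ) (c : List ℕ) :
    RefinesC a (b :: c) ↔ ∃ a1 a2, a = a1 ++ a2 ∧ a1 ≠ [] ∧ a1.sum = b ∧ RefinesC a2 c := by
  constructor
  · rintro ⟨P, h1, h2, h3⟩
    cases P with
    | nil => simp at h3
    | cons p P =>
      simp only [List.map_cons, List.cons.injEq] at h3
      refine ⟨p, P.flatten, by rw [← h2]; simp, h1 p (by simp), h3.1, P, ?_, rfl, h3.2⟩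
      exact fun q hq => h1 q (List.mem_cons_of_mem _ hq)
  · rintro ⟨a1, a2, rfl, h1, h2, P, h3, h4, h5⟩
    refine ⟨a1 :: P, ?_, by simp [h4], by simp [h2, h5]⟩
    intro p hp
    rcases List.mem_cons.1 hp with rfl | hp
    · exact h1
    · exact h3 p hp

lemma comp_tail {b : ℕ} {c : List ℕ} (h : IsComposition (b :: c)) : IsComposition c :=
  fun a ha => h a (List.mem_cons_of_mem _ ha)

lemma refines_1_1 (a c : List ℕ) (ha : IsComposition a) :
    RefinesC (1 :: a) (1 :: c) ↔ RefinesC a c := by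
  rw [refines_cons]
  constructor
  · rintro ⟨a1, a2, h1, h2, h3, h4⟩
    cases a1 with
    | nil => exact absurd rfl h2
    | cons x t =>
      simp only [List.cons_append, List.cons.injEq, List.sum_cons] at h1 h3
      obtain ⟨rfl, rfl⟩ := h1
      have : t = [] := by
        cases t with
        | nil => rfl
        | cons y t =>
          have := ha y (by simp)
          simp at h3; omega
      subst this
      exact h4
  · intro h
    exact ⟨[1], a, rfl, by simp, by simp, h⟩

lemma refines_1_inc (a c : List ℕ) (b : ℕ) :
    RefinesC (1 :: a) ((b + 1 + 1) :: c) ↔ RefinesC a ((b + 1) :: c) := by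
  rw [refines_cons, refines_cons]
  constructor
  · rintro ⟨a1, a2, h1, h2, h3, h4⟩
    cases a1 with
    | nil => exact absurd rfl h2
    | cons x t =>
      simp only [List.cons_append, List.cons.injEq, List.sum_cons] at h1 h3
      obtain ⟨rfl, rfl⟩ := h1
      refine ⟨t, a2, rfl, ?_, by omega, h4⟩
      rintro rfl
      simp at h3
  · rintro ⟨a1, a2, rfl, h2, h3, h4⟩
    exact ⟨1 :: a1, a2, rfl, by simp, by simp; omega, h4⟩

lemma not_refines_1 (a c : List ℕ) (k : ℕ) : ¬ RefinesC ((k + 2) :: a) (1 :: c) := by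
  rw [refines_cons]
  rintro ⟨a1, a2, h1, h2, h3, h4⟩
  cases a1 with
  | nil => exact absurd rfl h2
  | cons x t =>
    simp only [List.cons_append, List.cons.injEq, List.sum_cons] at h1 h3
    omega

lemma refines_inc_inc (a c : List ℕ) (k b : ℕ) :
    RefinesC ((k + 2) :: a) ((b + 1) :: c) ↔ RefinesC ((k + 1) :: a) (b :: c) := by
  rw [refines_cons, refines_cons]
  constructor
  · rintro ⟨a1, a2, h1, h2, h3, h4⟩
    cases a1 with
    | nil => exact absurd rfl h2
    | cons x t =>
      simp only [List.cons_append, List.cons.injEq, List.sum_cons] at h1 h3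
      obtain ⟨rfl, rfl⟩ := h1
      exact ⟨(k + 1) :: t, a2, rfl, by simp, by simp; omega, h4⟩
  · rintro ⟨a1, a2, h1, h2, h3, h4⟩
    cases a1 with
    | nil => exact absurd rfl h2
    | cons x t =>
      simp only [List.cons_append, List.cons.injEq, List.sum_cons] at h1 h3
      obtain ⟨rfl, rfl⟩ := h1
      exact ⟨(k + 2) :: t, a2, rfl, by simp, by simp; omega, h4⟩

/-- The order on (value, row) pairs. -/
def pR (p q : ℕ × ℕ) : Prop := p.1 < q.1 ∨ (p.1 = q.1 ∧ q.2 ≤ p.2)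

instance : DecidableRel pR := fun p q => by unfold pR; infer_instance

instance : Trans pR pR pR := ⟨by
  intro a b c h1 h2
  unfold pR at *
  omega⟩

lemma pR_antisymm (a b : ℕ × ℕ) (h1 : pR a b) (h2 : pR b a) : a = b := by
  unfold pR at *
  ext <;> omega

/-- The sorted list of values of a monomial. -/
def xm : List ℕ → List ℕ → List ℕ
  | a :: as, j :: js => List.replicate a j ++ xm as js
  | _, _ => []

lemma chain_iff (u : List ℕ) : ∀ (a js : List ℕ), a.length = js.length → js.IsChain (· < ·) →
    IsComposition a →
    ((u.length = (xm a js).length ∧ ((xm a js).zip u).IsChain pR) ↔ RefinesC a (co u)) := by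
  induction u with
  | nil =>
    intro a js hl _ ha
    rw [co, refines_nil]
    cases a with
    | nil => simp [xm]
    | cons x a =>
      cases js with
      | nil => simp at hl
      | cons j js =>
        have := ha x (by simp)
        simp [xm]; omega
  | cons r u ih =>
    intro a js hl hj ha
    cases a with
    | nil =>
      obtain ⟨b, c, h⟩ := co_cons r u
      rw [h, refines_cons]
      simp [xm]
    | cons x a =>
      cases js with
      | nil => simp at hl
      | cons j js =>
      have hx := ha x (by simp)
      have ha' := comp_tail ha
      have hl' : a.length = js.length := by simpa using hl
      have hj' : js.IsChain (· < ·) := hj.tail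
      cases u with
      | nil =>
        rw [co]
        obtain ⟨k, rfl⟩ : ∃ k, x = k + 1 := ⟨x - 1, by omega⟩
        cases k with
        | succ k =>
          have := not_refines_1 a [] k
          simp only [this, iff_false]
          simp [xm]
          intro h
          omega
        | zero =>
          rw [zero_add, refines_1_1 _ _ ha', refines_nil]
          cases a with
          | nil => simp [xm]
          | cons y a =>
            cases js with
            | nil => simp at hl'
            | cons j' js =>
              have := ha' y (by simp)
              simp [xm]; omega
      | cons s u =>
        obtain ⟨b, c, hco⟩ := co_cons s u
        obtain ⟨k, rfl⟩ : ∃ k, x = k + 1 := ⟨x - 1, by omega⟩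
        cases k with
        | zero =>
          have e1 : RefinesC ((0 + 1) :: a) (co (r :: s :: u)) ↔ RefinesC a (co (s :: u)) := by
            rw [co, hco, zero_add]
            split_ifs
            · rw [refines_1_1 _ _ ha']
            · rw [incH, refines_1_inc]
          rw [e1, ← ih a js hl' hj' ha']
          cases a with
          | nil => simp [xm]
          | cons y a =>
            cases js with
            | nil => simp at hl'
            | cons j' js =>
              have hy := ha' y (by simp)
              obtain ⟨y, rfl⟩ : ∃ k, y = k + 1 := ⟨y - 1, by omega⟩
              have hjj : j < j' := (List.isChain_cons_cons.1 hj).1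
              simp [xm, List.replicate_succ, List.isChain_cons_cons, pR, hjj]
        | succ k =>
          have hap : IsComposition ((k + 1) :: a) := by
            intro z hz
            rcases List.mem_cons.1 hz with rfl | hz
            · omega
            · exact ha' z hz
          have e2 := ih ((k + 1) :: a) (j :: js) (by simpa using hl) hj hap
          have e1 : RefinesC ((k + 2) :: a) (co (r :: s :: u)) ↔
              s ≤ r ∧ RefinesC ((k + 1) :: a) (co (s :: u)) := by
            rw [co, hco]
            split_ifs with h
            · simp only [not_refines_1, false_iff, not_and]; intro h'; omega
            · rw [incH, refines_inc_inc]
              constructor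
              · exact fun h' => ⟨by omega, h'⟩
              · exact fun h' => h'.2
          rw [e1, ← e2]
          simp [xm, List.replicate_succ, List.isChain_cons_cons, pR]
          tauto

/-- The compositions of `n`. -/
def comps (n : ℕ) : Set (List ℕ) := {β | IsComposition β ∧ β.sum = n}

lemma comps_finite (n : ℕ) : (comps n).Finite := by
  refine Set.Finite.subset (Set.finite_range (Composition.blocks : Composition n → List ℕ)) ?_
  rintro β ⟨h1, h2⟩
  exact ⟨⟨β, fun h => h1 _ h, h2⟩, rfl⟩

lemma FU_apply (α : List ℕ) (m : MonoU) :
    FU α m = (open Classical in if ValidMonoU m ∧ RefinesC m.1 α then 1 else 0) := by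
  classical
  have hfin : ({β : List ℕ | RefinesC β α} ∩ Function.support MU).Finite := by
    refine Set.Finite.subset (comps_finite α.sum) ?_
    rintro β ⟨⟨P, _, h2, h3⟩, hs⟩
    have hpos : IsComposition β := by
      rw [Function.mem_support] at hs
      by_contra hc
      apply hs
      funext m
      simp only [MU, Pi.zero_apply, ite_eq_right_iff]
      rintro ⟨rfl, hv⟩
      exact absurd hv.2.2.2 hc
    have hsum : β.sum = α.sum := by rw [← h2, ← h3, List.sum_flatten]
    exact ⟨hpos, hsum⟩
  rw [FU, finsum_mem_eq_sum _ hfin, Finset.sum_apply]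
  simp only [MU]
  by_cases h : ValidMonoU m ∧ RefinesC m.1 α
  · rw [if_pos h, Finset.sum_eq_single m.1]
    · simp [h.1]
    · intro b _ hb
      rw [if_neg]; rintro ⟨h1, _⟩; exact hb h1.symm
    · intro hn
      exfalso
      apply hn
      rw [Set.Finite.mem_toFinset]
      refine ⟨h.2, ?_⟩
      rw [Function.mem_support]
      intro h0
      have := congrFun h0 m
      simp [MU, h.1] at this
  · rw [if_neg h]
    apply Finset.sum_eq_zero
    intro b hb
    rw [if_neg]
    rintro ⟨rfl, hv⟩
    rw [Set.Finite.mem_toFinset] at hb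
    exact h ⟨hv, hb.1⟩

end Pf

end ColoredImm

namespace ColoredImm

namespace Pf

open Uncolored

/-! ### Tableaux and words -/

/-- The `r`-th row encoded in a list of (value, row) pairs. -/
def rowP (Z : List (ℕ × ℕ)) (r : ℕ) : List ℕ := (Z.filter (fun p => p.2 == r)).map Prod.fst

/-- The filling encoded in a list of (value, row) pairs. -/
def Phi (k : ℕ) (Z : List (ℕ × ℕ)) : Filling := (List.range k).map (rowP Z)

/-- The (value, row) pairs of a filling. -/
def pairs : ℕ → Filling → List (ℕ × ℕ)
  | _, [] => []
  | t, row :: f => row.map (fun v => (v, t)) ++ pairs (t + 1) f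

lemma pairs_fst (t : ℕ) (f : Filling) : (pairs t f).map Prod.fst = f.flatten := by
  induction f generalizing t with
  | nil => rfl
  | cons row f ih => simp [pairs, ih, Function.comp_def]

lemma pairs_snd (t : ℕ) (f : Filling) : (pairs t f).map Prod.snd = word t (f.map List.length) := by
  induction f generalizing t with
  | nil => rfl
  | cons row f ih => simp [pairs, ih, word, Function.comp_def]

lemma rowP_append (Z1 Z2 : List (ℕ × ℕ)) (r : ℕ) : rowP (Z1 ++ Z2) r = rowP Z1 r ++ rowP Z2 r := by
  simp [rowP]

lemma mem_rowP (Z : List (ℕ × ℕ)) (r v : ℕ) : v ∈ rowP Z r ↔ (v, r) ∈ Z := by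
  simp [rowP]

lemma rowP_pairs (t r : ℕ) (f : Filling) : rowP (pairs t f) (t + r) = f.getD r [] := by
  induction f generalizing t r with
  | nil => simp [pairs, rowP]
  | cons row f ih =>
    rw [pairs, rowP_append]
    cases r with
    | zero =>
      have h1 : rowP (pairs (t + 1) f) (t + 0) = [] := by
        rw [List.eq_nil_iff_forall_not_mem]
        intro v hv
        rw [mem_rowP] at hv
        have h2 : t + 0 ∈ (pairs (t + 1) f).map Prod.snd := List.mem_map.2 ⟨_, hv, rfl⟩
        rw [pairs_snd] at h2
        have := le_of_mem_word _ _ _ h2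
        omega
      rw [h1]
      simp [rowP, List.filter_map, Function.comp_def]
    | succ r =>
      rw [show t + (r + 1) = t + 1 + r by omega, ih]
      have : t ≠ t + 1 + r := by omega
      simp [rowP, List.filter_map, Function.comp_def, this]

lemma count_rowP (Z : List (ℕ × ℕ)) (r v : ℕ) : (rowP Z r).count v = Z.count (v, r) := by
  induction Z with
  | nil => rfl
  | cons p Z ih =>
    obtain ⟨a, b⟩ := p
    unfold rowP at ih ⊢
    by_cases h : b = r
    · subst h
      simp [List.count_cons, ih]
    · simp [ih, h]

lemma Phi_getD (k r : ℕ) (Z : List (ℕ × ℕ)) :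
    (Phi k Z).getD r [] = if r < k then rowP Z r else [] := by
  split_ifs with h
  · simp [Phi, List.getD, h]
  · simp [Phi, List.getD, h]

lemma Phi_perm (k : ℕ) (Z : List (ℕ × ℕ)) (hZ : ∀ p ∈ Z, p.2 < k) : (pairs 0 (Phi k Z)).Perm Z := by
  rw [List.perm_iff_count]
  rintro ⟨v, r⟩
  have := rowP_pairs 0 r (Phi k Z)
  rw [zero_add] at this
  rw [← count_rowP, this, Phi_getD]
  split_ifs with h
  · rw [count_rowP]
  · simp only [List.count_nil]
    symm
    rw [List.count_eq_zero]
    intro hm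
    exact h (hZ _ hm)

lemma rowP_sorted (Z : List (ℕ × ℕ)) (hZ : Z.Pairwise pR) (r : ℕ) :
    (rowP Z r).Pairwise (· ≤ ·) := by
  unfold rowP
  rw [List.pairwise_map]
  refine (hZ.filter _).imp ?_
  intro a b h
  unfold pR at h
  omega

lemma col_iff (f : Filling) (h1 : ∀ row ∈ f, row ≠ []) (h2 : ∀ row ∈ f, row.Pairwise (· ≤ ·)) :
    (f.filterMap List.head?).IsChain (· < ·) ↔
      ∀ r, r + 1 < f.length → ∀ v ∈ f.getD (r + 1) [], ∃ v' ∈ f.getD r [], v' < v := by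
  induction f with
  | nil => simp
  | cons row f ih =>
    have ih' := ih (fun x hx => h1 x (List.mem_cons_of_mem _ hx))
      (fun x hx => h2 x (List.mem_cons_of_mem _ hx))
    clear ih
    cases f with
    | nil =>
      cases row with
      | nil => simp at h1
      | cons a row => simp
    | cons row2 f =>
      cases row with
      | nil => simp at h1
      | cons a row =>
        cases row2 with
        | nil => simp at h1
        | cons b row2 =>
          simp only [List.filterMap_cons, List.head?_cons, List.isChain_cons_cons] at ih' ⊢
          rw [ih']
          have hs1 := List.pairwise_cons.1 (h2 (a :: row) (by simp))
          have hs2 := List.pairwise_cons.1 (h2 (b :: row2) (by simp))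
          constructor
          · rintro ⟨hab, h⟩ r hr
            cases r with
            | zero =>
              intro v hv
              refine ⟨a, by simp, ?_⟩
              simp only [List.getD_cons_succ, List.getD_cons_zero, List.mem_cons] at hv
              rcases hv with rfl | hv
              · exact hab
              · have := hs2.1 v hv
                omega
            | succ r =>
              have := h r (by simp at hr ⊢; omega)
              simpa using this
          · intro h
            constructor
            · obtain ⟨v', hv', hlt⟩ := h 0 (by simp) b (by simp)
              simp only [List.getD_cons_zero, List.mem_cons] at hv'
              rcases hv' with rfl | hv'
              · exact hlt
              · have := hs1.1 v' hv'
                omega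
            · intro r hr
              have := h (r + 1) (by simp at hr ⊢; omega)
              simpa using this

lemma col_RG (k : ℕ) (Z : List (ℕ × ℕ)) (hZ : Z.Pairwise pR) (hk : ∀ p ∈ Z, p.2 < k) :
    (∀ r, r + 1 < k → ∀ v ∈ rowP Z (r + 1), ∃ v' ∈ rowP Z r, v' < v) ↔ RG (Z.map Prod.snd) := by
  constructor
  · intro h p r q hu
    rw [List.map_eq_append_iff] at hu
    obtain ⟨Z1, Z2, rfl, rfl, hu⟩ := hu
    rw [List.map_eq_cons_iff] at hu
    obtain ⟨⟨v, r'⟩, Z3, rfl, hr, rfl⟩ := hu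
    simp only at hr
    subst hr
    obtain ⟨v', hv', hlt⟩ := h r (hk (v, r + 1) (by simp)) v (by rw [mem_rowP]; simp)
    rw [mem_rowP] at hv'
    simp only [List.mem_append, List.mem_cons] at hv'
    rcases hv' with hv' | hv' | hv'
    · exact List.mem_map.2 ⟨_, hv', rfl⟩
    · simp at hv'
    · have := (List.pairwise_cons.1 (List.pairwise_append.1 hZ).2.1).1 _ hv'
      simp only [pR] at this
      omega
  · intro h r hr v hv
    rw [mem_rowP] at hv
    obtain ⟨Z1, Z2, rfl⟩ := List.append_of_mem hv
    have := h (Z1.map Prod.snd) r (Z2.map Prod.snd) (by simp)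
    obtain ⟨⟨v', r'⟩, hm, hr'⟩ := List.mem_map.1 this
    simp only at hr'
    subst hr'
    refine ⟨v', by rw [mem_rowP]; simp [hm], ?_⟩
    have := (List.pairwise_append.1 hZ).2.2 _ hm (v, r' + 1) (by simp)
    simp only [pR] at this
    omega

/-- Words of tableaux of shape `α` whose sorted list of values is `x`. -/
def UX (α x : List ℕ) : Set (List ℕ) :=
  {u | u ∈ US α ∧ u.length = x.length ∧ (x.zip u).IsChain pR}

/-- Tableaux of shape `α` whose sorted list of values is `x`. -/
def FX (α x : List ℕ) : Set Filling := {f | IsIT α f ∧ f.flatten.Perm x}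

lemma mem_US_lt {α u : List ℕ} (h : u ∈ US α) : ∀ r ∈ u, r < α.length := by
  intro r hr
  have := lt_of_mem_word 0 α r (h.1.mem_iff.1 hr)
  omega

lemma rows_ne {α : List ℕ} (hα : IsComposition α) {f : Filling} (hf : f.map List.length = α) :
    ∀ row ∈ f, row ≠ [] := by
  rintro row hr rfl
  have := hα 0 (by rw [← hf]; exact List.mem_map.2 ⟨_, hr, rfl⟩)
  omega

lemma mapsTo (α x : List ℕ) (hα : IsComposition α) (hxp : ∀ v ∈ x, 1 ≤ v) :
    Set.MapsTo (fun u => Phi α.length (x.zip u)) (UX α x) (FX α x) := by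
  rintro u ⟨hu, hl, hc⟩
  have hZ : (x.zip u).Pairwise pR := List.isChain_iff_pairwise.1 hc
  have hsnd : (x.zip u).map Prod.snd = u := List.map_snd_zip (by omega)
  have hfst : (x.zip u).map Prod.fst = x := List.map_fst_zip (by omega)
  have hk : ∀ p ∈ x.zip u, p.2 < α.length := by
    intro p hp
    exact mem_US_lt hu _ (by rw [← hsnd]; exact List.mem_map.2 ⟨_, hp, rfl⟩)
  have hperm := Phi_perm α.length _ hk
  have hflat : (Phi α.length (x.zip u)).flatten.Perm x := by
    have := hperm.map Prod.fst
    rwa [pairs_fst, hfst] at this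
  have hshape : (Phi α.length (x.zip u)).map List.length = α := by
    refine List.ext_getElem (by simp [Phi]) ?_
    intro r h1 h2
    have e : ((x.zip u).filter (fun p => p.2 == r)).length = u.count r := by
      conv_rhs => rw [← hsnd]
      rw [List.count, List.countP_map, List.countP_eq_length_filter]
      rfl
    have := count_word r 0 α
    rw [zero_add, ← hu.1.count_eq, List.getD_eq_getElem _ _ h2] at this
    simp [Phi, rowP, e, this]
  have hrows : ∀ row ∈ Phi α.length (x.zip u), row.Pairwise (· ≤ ·) := by
    intro row hr
    simp only [Phi, List.mem_map] at hr
    obtain ⟨r, _, rfl⟩ := hr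
    exact rowP_sorted _ hZ r
  refine ⟨⟨hshape, fun row hr => List.isChain_iff_pairwise.2 (hrows row hr), ?_, ?_⟩, hflat⟩
  · change List.IsChain _ _
    rw [col_iff _ (rows_ne hα hshape) hrows]
    have := (col_RG α.length _ hZ hk).2 (by rw [hsnd]; exact hu.2)
    intro r hr
    have hr' : r + 1 < α.length := by simpa [Phi] using hr
    rw [Phi_getD, Phi_getD, if_pos hr', if_pos (by omega)]
    exact this r hr'
  · intro v hv
    exact hxp v (hflat.mem_iff.1 hv)

lemma injOn (α x : List ℕ) : Set.InjOn (fun u => Phi α.length (x.zip u)) (UX α x) := by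
  rintro u ⟨hu, hl, hc⟩ u' ⟨hu', hl', hc'⟩ h
  simp only at h
  have hsnd : ∀ u : List ℕ, u.length = x.length → (x.zip u).map Prod.snd = u :=
    fun u hl => List.map_snd_zip (by omega)
  have hk : ∀ u ∈ US α, u.length = x.length → ∀ p ∈ x.zip u, p.2 < α.length := by
    intro u hu hl p hp
    exact mem_US_lt hu _ (by rw [← hsnd u hl]; exact List.mem_map.2 ⟨_, hp, rfl⟩)
  have h1 := Phi_perm α.length _ (hk u hu hl)
  have h2 := Phi_perm α.length _ (hk u' hu' hl')
  rw [h] at h1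
  have : x.zip u = x.zip u' := List.Perm.eq_of_pairwise (le := pR)
    (fun a b _ _ h1 h2 => pR_antisymm a b h1 h2) (List.isChain_iff_pairwise.1 hc)
    (List.isChain_iff_pairwise.1 hc') (h1.symm.trans h2)
  rw [← hsnd u hl, this, hsnd u' hl']

lemma surjOn (α x : List ℕ) (hα : IsComposition α) (hx : x.Pairwise (· ≤ ·)) :
    Set.SurjOn (fun u => Phi α.length (x.zip u)) (UX α x) (FX α x) := by
  rintro f ⟨⟨hs, hr, hc, hp⟩, hflat⟩
  obtain ⟨Z, hZp, hZ⟩ : ∃ Z : List (ℕ × ℕ), Z.Perm (pairs 0 f) ∧ Z.Pairwise pR := by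
    refine ⟨(pairs 0 f).mergeSort (fun a b => decide (pR a b)), List.mergeSort_perm _ _, ?_⟩
    have := List.pairwise_mergeSort (le := fun a b => decide (pR a b)) ?_ ?_ (pairs 0 f)
    · simpa using this
    · intro a b c
      simp only [decide_eq_true_eq]
      unfold pR
      omega
    · intro a b
      simp only [Bool.or_eq_true, decide_eq_true_eq]
      unfold pR
      omega
  have hfx : Z.map Prod.fst = x := by
    refine List.Perm.eq_of_pairwise (le := (· ≤ ·)) (fun a b _ _ h1 h2 => le_antisymm h1 h2) ?_ hx ?_
    · rw [List.pairwise_map]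
      refine hZ.imp ?_
      intro a b h
      unfold pR at h
      omega
    · have := hZp.map Prod.fst
      rw [pairs_fst] at this
      exact this.trans hflat
  have hsp : (Z.map Prod.snd).Perm (word 0 α) := by
    have := hZp.map Prod.snd
    rwa [pairs_snd, hs] at this
  have hzip : x.zip (Z.map Prod.snd) = Z := by
    rw [← hfx, List.zip_map']
    simp
  have hlen : f.length = α.length := by rw [← hs]; simp
  have hrows : ∀ row ∈ f, row.Pairwise (· ≤ ·) :=
    fun row h => List.isChain_iff_pairwise.1 (hr row h)
  have hrow : ∀ r, rowP Z r = f.getD r [] := by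
    intro r
    have e := rowP_pairs 0 r f
    rw [zero_add] at e
    refine List.Perm.eq_of_pairwise (le := (· ≤ ·)) (fun a b _ _ h1 h2 => le_antisymm h1 h2)
      (rowP_sorted Z hZ r) ?_ ?_
    · by_cases h : r < f.length
      · rw [List.getD_eq_getElem _ _ h]
        exact hrows _ (List.getElem_mem h)
      · rw [List.getD_eq_default _ _ (by omega)]
        exact List.Pairwise.nil
    · rw [← e]
      exact (hZp.filter _).map _
  have hk : ∀ p ∈ Z, p.2 < α.length := by
    intro p hp
    have := lt_of_mem_word 0 α p.2 (hsp.mem_iff.1 (List.mem_map.2 ⟨_, hp, rfl⟩))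
    omega
  refine ⟨Z.map Prod.snd, ⟨⟨hsp, ?_⟩, ?_, ?_⟩, ?_⟩
  · rw [← col_RG α.length Z hZ hk]
    have := (col_iff f (rows_ne hα hs) hrows).1 hc
    intro r hr'
    rw [hrow, hrow]
    exact this r (by omega)
  · rw [← hfx]; simp
  · rw [hzip]; exact List.isChain_iff_pairwise.2 hZ
  · simp only [hzip]
    refine List.ext_getElem (by simp [Phi, hlen]) ?_
    intro r h1 h2
    have := hrow r
    rw [List.getD_eq_getElem _ _ h2] at this
    simp [Phi, this]

lemma ncard_FX (α x : List ℕ) (hα : IsComposition α) (hx : x.Pairwise (· ≤ ·))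
    (hxp : ∀ v ∈ x, 1 ≤ v) : (FX α x).ncard = (UX α x).ncard := by
  rw [← (injOn α x).ncard_image]
  congr 1
  exact Set.Subset.antisymm (surjOn α x hα hx) (mapsTo α x hα hxp).image_subset

end Pf

end ColoredImm

namespace ColoredImm

namespace Pf

open Uncolored

/-! ### Monomials -/

/-- The values occurring in a filling. -/
def vals (f : Filling) : List ℕ :=
  ((List.range (maxEntry f)).map (· + 1)).filter (fun v => decide (countOf f v ≠ 0))

lemma countOf_eq (f : Filling) (v : ℕ) : countOf f v = f.flatten.count v := by
  rw [countOf, List.count, List.countP_eq_length_filter]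

lemma le_foldr_max (l : List ℕ) : ∀ v ∈ l, v ≤ l.foldr max 0 := by
  induction l with
  | nil => simp
  | cons a l ih =>
    intro v hv
    rw [List.foldr_cons]
    rcases List.mem_cons.1 hv with rfl | hv
    · exact le_max_left _ _
    · exact (ih v hv).trans (le_max_right _ _)

lemma mem_vals (f : Filling) (v : ℕ) : v ∈ vals f ↔ 1 ≤ v ∧ v ∈ f.flatten := by
  unfold vals
  rw [List.mem_filter, List.mem_map, decide_eq_true_eq, countOf_eq, ← Nat.pos_iff_ne_zero,
    List.count_pos_iff]
  constructor
  · rintro ⟨⟨w, _, rfl⟩, h⟩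
    exact ⟨by omega, h⟩
  · rintro ⟨h1, h2⟩
    refine ⟨⟨v - 1, ?_, by omega⟩, h2⟩
    have := le_foldr_max _ v h2
    rw [List.mem_range, maxEntry]
    omega

lemma vals_sorted (f : Filling) : (vals f).Pairwise (· < ·) := by
  unfold vals
  refine List.Pairwise.filter _ ?_
  rw [List.pairwise_map]
  refine List.pairwise_lt_range.imp ?_
  intro a b h
  omega

lemma mem_xm {v : ℕ} : ∀ {a js : List ℕ}, v ∈ xm a js → v ∈ js
  | [], _, h => by simp [xm] at h
  | _ :: _, [], h => by simp [xm] at h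
  | a :: as, j :: js, h => by
    simp only [xm, List.mem_append, List.mem_replicate] at h
    rcases h with h | h
    · simp [h.2]
    · exact List.mem_cons_of_mem _ (mem_xm h)

lemma xm_mem {v : ℕ} : ∀ {a js : List ℕ}, a.length = js.length → IsComposition a → v ∈ js →
    v ∈ xm a js
  | _, [], _, _, h => by simp at h
  | [], _ :: _, h, _, _ => by simp at h
  | a :: as, j :: js, hl, ha, h => by
    simp only [xm, List.mem_append, List.mem_replicate]
    rcases List.mem_cons.1 h with rfl | h
    · left
      have := ha a (by simp)
      exact ⟨by omega, rfl⟩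
    · right
      exact xm_mem (by simpa using hl) (comp_tail ha) h

lemma xm_sorted : ∀ {a js : List ℕ}, js.Pairwise (· < ·) → (xm a js).Pairwise (· ≤ ·)
  | [], _, _ => by simp [xm]
  | _ :: _, [], _ => by simp [xm]
  | a :: as, j :: js, h => by
    rw [List.pairwise_cons] at h
    simp only [xm, List.pairwise_append, List.pairwise_replicate]
    refine ⟨by simp, xm_sorted h.2, ?_⟩
    intro x hx y hy
    have := h.1 y (mem_xm hy)
    have := List.eq_of_mem_replicate hx
    omega

lemma count_xm (v : ℕ) (g : ℕ → ℕ) : ∀ {js : List ℕ}, js.Pairwise (· < ·) →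
    (xm (js.map g) js).count v = if v ∈ js then g v else 0
  | [], _ => by simp [xm]
  | j :: js, h => by
    rw [List.pairwise_cons] at h
    rw [List.map_cons, xm, List.count_append, count_xm v g h.2, List.count_replicate]
    by_cases hv : v = j
    · subst hv
      have : v ∉ js := fun hm => absurd (h.1 v hm) (lt_irrefl _)
      simp [this]
    · have : ¬ j = v := fun h => hv h.symm
      simp [hv, this]

lemma map_count_xm : ∀ {a js : List ℕ}, a.length = js.length → js.Pairwise (· < ·) →
    js.map (fun v => (xm a js).count v) = a
  | [], [], _, _ => rfl
  | _ :: _, [], h, _ => by simp at h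
  | [], _ :: _, h, _ => by simp at h
  | a :: as, j :: js, hl, h => by
    rw [List.pairwise_cons] at h
    have ih := map_count_xm (a := as) (js := js) (by simpa using hl) h.2
    rw [List.map_cons]
    congr 1
    · have : j ∉ xm as js := fun hm => absurd (h.1 j (mem_xm hm)) (lt_irrefl _)
      simp [xm, List.count_append, List.count_eq_zero.2 this]
    · conv_rhs => rw [← ih]
      refine List.map_congr_left ?_
      intro v hv
      have := h.1 v hv
      have : ¬ j = v := by omega
      simp [xm, List.count_append, List.count_replicate, this]

lemma mono_iff (f : Filling) (hf : ∀ x ∈ f.flatten, 1 ≤ x) (m : MonoU) :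
    monoOfU f = m ↔ ValidMonoU m ∧ f.flatten.Perm (xm m.1 m.2) := by
  have e : monoOfU f = ((vals f).map (countOf f), vals f) := rfl
  rw [e]
  have hs := vals_sorted f
  constructor
  · rintro rfl
    refine ⟨⟨by simp, List.isChain_iff_pairwise.2 hs, ?_, ?_⟩, ?_⟩
    · intro j hj
      exact ((mem_vals f j).1 hj).1
    · intro a ha
      obtain ⟨v, hv, rfl⟩ := List.mem_map.1 ha
      rw [countOf_eq]
      exact List.count_pos_iff.2 ((mem_vals f v).1 hv).2
    · rw [List.perm_iff_count]
      intro v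
      rw [count_xm v _ hs, countOf_eq]
      split_ifs with h
      · rfl
      · rw [List.count_eq_zero]
        intro hv
        exact h ((mem_vals f v).2 ⟨hf v hv, hv⟩)
  · rintro ⟨⟨h1, h2, h3, h4⟩, hp⟩
    obtain ⟨a, js⟩ := m
    simp only at h1 h2 h3 h4 hp
    have h2' : js.Pairwise (· < ·) := List.isChain_iff_pairwise.1 h2
    have hv : vals f = js := by
      refine List.Perm.eq_of_pairwise (le := (· < ·))
        (fun a b _ _ h1 h2 => absurd h1 (lt_asymm h2)) hs h2' ?_
      rw [List.perm_ext_iff_of_nodup (hs.imp (fun h => h.ne)) (h2'.imp (fun h => h.ne))]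
      intro v
      rw [mem_vals, hp.mem_iff]
      constructor
      · exact fun h => mem_xm h.2
      · exact fun h => ⟨h3 v h, xm_mem h1 h4 h⟩
    rw [hv]
    congr 1
    conv_rhs => rw [← map_count_xm h1 h2']
    refine List.map_congr_left fun v _ => ?_
    rw [countOf_eq, hp.count_eq]

lemma dualImm_apply (α : List ℕ) (hα : IsComposition α) (m : MonoU) :
    dualImmU α m = (open Classical in
      if ValidMonoU m then (({u | u ∈ US α ∧ RefinesC m.1 (co u)}.ncard : ℕ) : ℚ) else 0) := by
  classical
  unfold dualImmU
  split_ifs with h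
  · have hj : m.2.Pairwise (· < ·) := List.isChain_iff_pairwise.1 h.2.1
    have e1 : {f : Filling | IsIT α f ∧ monoOfU f = m} = FX α (xm m.1 m.2) := by
      ext f
      constructor
      · rintro ⟨h1, h2⟩
        exact ⟨h1, ((mono_iff f h1.2.2.2 m).1 h2).2⟩
      · rintro ⟨h1, h2⟩
        exact ⟨h1, (mono_iff f h1.2.2.2 m).2 ⟨h, h2⟩⟩
    rw [e1, ncard_FX α _ hα (xm_sorted hj) (fun v hv => h.2.2.1 v (mem_xm hv))]
    congr 2
    ext u
    exact and_congr_right fun _ => chain_iff u m.1 m.2 h.1 h.2.1 h.2.2.2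
  · have e1 : {f : Filling | IsIT α f ∧ monoOfU f = m} = ∅ := by
      rw [Set.eq_empty_iff_forall_notMem]
      rintro f ⟨h1, h2⟩
      exact h ((mono_iff f h1.2.2.2 m).1 h2).1
    rw [e1]
    simp

/-! ### Standard tableaux -/

/-- Ascent positions. -/
def asc : ℕ → List ℕ → List ℕ
  | k, r :: s :: u => if r < s then k :: asc (k + 1) (s :: u) else asc (k + 1) (s :: u)
  | _, _ => []

/-- Add to the head. -/
def addH (d : ℕ) : List ℕ → List ℕ
  | [] => []
  | b :: c => (b + d) :: c

lemma comp_asc (u : List ℕ) : ∀ s k a, a < k →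
    List.zipWith (fun a b => b - a) (a :: asc k (s :: u)) (asc k (s :: u) ++ [k + u.length]) =
      addH (k - 1 - a) (co (s :: u)) := by
  induction u with
  | nil =>
    intro s k a h
    simp [asc, co, addH]
    omega
  | cons s' u ih =>
    intro s k a h
    obtain ⟨b, c, hco⟩ := co_cons s' u
    rw [asc, co]
    split_ifs with hs
    · have := ih s' (k + 1) k (by omega)
      rw [List.cons_append, List.zipWith_cons_cons,
        show k + (s' :: u).length = k + 1 + u.length by simp; omega, this, hco]
      simp [addH]
      omega
    · have := ih s' (k + 1) a (by omega)
      rw [show k + (s' :: u).length = k + 1 + u.length by simp; omega, this, hco]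
      simp [addH, incH]
      omega

lemma asc_eq (u : List ℕ) : ∀ k, (List.range' k (u.length - 1)).filter
    (fun i => decide (u.getD (i - k) 0 < u.getD (i - k + 1) 0)) = asc k u := by
  induction u with
  | nil => intro k; simp [asc]
  | cons r u ih =>
    intro k
    cases u with
    | nil => simp [asc]
    | cons s u =>
      have e : (List.range' (k + 1) u.length).filter
          (fun i => decide ((r :: s :: u).getD (i - k) 0 < (r :: s :: u).getD (i - k + 1) 0)) =
          asc (k + 1) (s :: u) := by
        rw [← ih (k + 1)]
        refine List.filter_congr ?_
        intro i hi
        rw [List.mem_range'_1] at hi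
        rw [show i - k = (i - (k + 1)) + 1 by omega]
        simp
      simp only [List.length_cons, Nat.add_sub_cancel, List.range'_succ, List.filter_cons, e, asc]
      simp

lemma descComp_Phi (α u : List ℕ) (hu : u ∈ US α) :
    descComp (Phi α.length ((List.range' 1 u.length).zip u)) = co u := by
  set f := Phi α.length ((List.range' 1 u.length).zip u) with hf
  have hsnd : ((List.range' 1 u.length).zip u).map Prod.snd = u := List.map_snd_zip (by simp)
  have hfst : ((List.range' 1 u.length).zip u).map Prod.fst = List.range' 1 u.length :=
    List.map_fst_zip (by simp)
  have hk : ∀ p ∈ (List.range' 1 u.length).zip u, p.2 < α.length := by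
    intro p hp
    exact mem_US_lt hu _ (by rw [← hsnd]; exact List.mem_map.2 ⟨_, hp, rfl⟩)
  have hn : nBoxes f = u.length := by
    have := ((Phi_perm α.length _ hk).map Prod.fst).length_eq
    rw [pairs_fst, hfst, List.length_range'] at this
    exact this
  have hmem : ∀ i (hi : i < u.length) r, (i + 1, r) ∈ (List.range' 1 u.length).zip u ↔ u[i] = r := by
    intro i hi r
    rw [List.mem_iff_getElem]
    constructor
    · rintro ⟨j, hj, h⟩
      rw [List.getElem_zip, Prod.mk.injEq, List.getElem_range'] at h
      have : j = i := by omega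
      subst this
      exact h.2
    · intro h
      refine ⟨i, by simpa using hi, ?_⟩
      rw [List.getElem_zip, Prod.mk.injEq, List.getElem_range']
      exact ⟨by omega, h⟩
  have hrow : ∀ i < u.length, rowOf f (i + 1) = u.getD i 0 := by
    intro i hi
    have hlt := mem_US_lt hu _ (List.getElem_mem hi)
    rw [List.getD_eq_getElem _ _ hi, rowOf, List.findIdx_eq (by simpa [hf, Phi] using hlt)]
    constructor
    · simp [hf, Phi, mem_rowP, hmem i hi]
    · intro j hj
      simp only [hf, Phi, List.getElem_map, List.getElem_range]
      rw [← Bool.not_eq_true, List.contains_iff_mem, mem_rowP, hmem i hi]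
      omega
  unfold descComp
  rw [hn]
  cases u with
  | nil => simp [co]
  | cons s u =>
    rw [if_neg (by simp)]
    have hd : descList f = asc 1 (s :: u) := by
      rw [← asc_eq, descList, hn]
      refine List.filter_congr ?_
      intro i hi
      rw [List.mem_range'_1] at hi
      have h1 := hrow (i - 1) (by omega)
      have h2 := hrow i (by omega)
      rw [show i - 1 + 1 = i by omega] at h1 ⊢
      rw [h1, h2]
    rw [compOf, hd]
    have := comp_asc u s 1 0 (by omega)
    rw [show (s :: u).length = 1 + u.length by simp; omega, this]
    obtain ⟨b, c, hco⟩ := co_cons s u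
    rw [hco]; rfl

lemma LU_eq (α β : List ℕ) (hα : IsComposition α) :
    LU α β = {u | u ∈ US α ∧ co u = β}.ncard := by
  have hlen : ∀ u ∈ US α, u.length = α.sum := by
    intro u hu
    rw [hu.1.length_eq, word_length]
  set x := List.range' 1 α.sum with hx
  have hxs : x.Pairwise (· ≤ ·) := (List.pairwise_lt_range' (s := 1) (n := α.sum)).imp (fun h => h.le)
  have hxp : ∀ v ∈ x, 1 ≤ v := by
    intro v hv
    rw [hx, List.mem_range'_1] at hv
    exact hv.1
  have hUX : UX α x = US α := by
    ext u
    refine ⟨fun h => h.1, fun h => ⟨h, by simp [hx, hlen u h], ?_⟩⟩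
    rw [List.isChain_iff_pairwise]
    have h1 : ((x.zip u).map Prod.fst).Pairwise (· < ·) := by
      rw [List.map_fst_zip (by simp [hx, hlen u h])]
      exact List.pairwise_lt_range'
    rw [List.pairwise_map] at h1
    exact h1.imp (fun h => Or.inl h)
  have e : {f : Filling | IsIT α f ∧ IsStandardF f ∧ descComp f = β} =
      (fun u => Phi α.length (x.zip u)) '' {u | u ∈ US α ∧ co u = β} := by
    have hst : ∀ f, IsIT α f → (IsStandardF f ↔ f.flatten.Perm x) := by
      intro f hf
      rw [IsStandardF, nBoxes, List.length_flatten, hf.1]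
    ext f
    constructor
    · rintro ⟨h1, h2, h3⟩
      obtain ⟨u, hu, rfl⟩ := surjOn α x hα hxs ⟨h1, (hst f h1).1 h2⟩
      refine ⟨u, ⟨hu.1, ?_⟩, rfl⟩
      rw [← h3]
      simp only [hx]
      rw [← hlen u hu.1, descComp_Phi α u hu.1]
    · rintro ⟨u, ⟨hu, rfl⟩, rfl⟩
      have := mapsTo α x hα hxp (by rw [hUX]; exact hu)
      refine ⟨this.1, (hst _ this.1).2 this.2, ?_⟩
      simp only [hx]
      rw [← hlen u hu, descComp_Phi α u hu]
  rw [LU, e, Set.InjOn.ncard_image]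
  refine (injOn α x).mono ?_
  rw [hUX]
  exact fun u hu => hu.1

end Pf

end ColoredImm

namespace ColoredImm

namespace Pf

open Uncolored

/-! ### The expansion and its inversion -/

lemma dual_expand (α : List ℕ) (hα : IsComposition α) :
    dualImmU α = ∑ β ∈ (comps_finite α.sum).toFinset, (LU α β : ℚ) • FU β := by
  classical
  funext m
  rw [dualImm_apply α hα, Finset.sum_apply]
  simp only [Pi.smul_apply, FU_apply, smul_eq_mul]
  split_ifs with h
  · simp only [h, true_and]
    set T := (US_finite α).toFinset with hT
    have e1 : {u | u ∈ US α ∧ RefinesC m.1 (co u)}.ncard =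
        (T.filter (fun u => RefinesC m.1 (co u))).card := by
      rw [← Set.ncard_coe_finset]
      congr 1
      ext u
      simp [hT]
    have e2 : ∀ β, LU α β = (T.filter (fun u => co u = β)).card := by
      intro β
      rw [LU_eq α β hα, ← Set.ncard_coe_finset]
      congr 1
      ext u
      simp [hT]
    have hmaps : ∀ u ∈ T, co u ∈ (comps_finite α.sum).toFinset := by
      intro u hu
      rw [hT, Set.Finite.mem_toFinset] at hu
      rw [Set.Finite.mem_toFinset]
      refine ⟨co_pos u, ?_⟩
      rw [co_sum, hu.1.length_eq, word_length]
    rw [e1, Finset.card_filter, Nat.cast_sum, ← Finset.sum_fiberwise_of_maps_to hmaps]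
    refine Finset.sum_congr rfl fun β _ => ?_
    rw [e2]
    have : ∀ u ∈ T.filter (fun u => co u = β),
        (((if RefinesC m.1 (co u) then 1 else 0 : ℕ)) : ℚ) = if RefinesC m.1 β then 1 else 0 := by
      intro u hu
      rw [(Finset.mem_filter.1 hu).2]
      split_ifs <;> simp
    rw [Finset.sum_congr rfl this, Finset.sum_const, nsmul_eq_mul]
  · simp [h]

lemma LU_self (α : List ℕ) (hα : IsComposition α) : LU α α = 1 := by
  rw [LU_eq α α hα, US_diag hα, Set.ncard_singleton]

lemma LU_ne_zero {α β : List ℕ} (hα : IsComposition α) (h : LU α β ≠ 0) :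
    ∃ u ∈ US α, co u = β := by
  rw [LU_eq α β hα] at h
  obtain ⟨u, hu⟩ := Set.nonempty_of_ncard_ne_zero h
  exact ⟨u, hu.1, hu.2⟩

lemma edge_props {α β : List ℕ} (hα : IsComposition α) (h : IsEdgeU α β) :
    IsComposition β ∧ β.sum = α.sum ∧ wt α < wt β := by
  obtain ⟨u, hu, rfl⟩ := LU_ne_zero hα h.2
  refine ⟨co_pos u, ?_, wt_lt hα hu h.1⟩
  rw [co_sum, hu.1.length_eq, word_length]

open Classical in
/-- The out-neighbours of a composition. -/
noncomputable def nbrs (α : List ℕ) : Finset (List ℕ) :=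
  (comps_finite α.sum).toFinset.filter (fun β => IsEdgeU α β)

lemma mem_nbrs {α β : List ℕ} (hα : IsComposition α) : β ∈ nbrs α ↔ IsEdgeU α β := by
  classical
  unfold nbrs
  rw [Finset.mem_filter, Set.Finite.mem_toFinset]
  refine ⟨fun h => h.2, fun h => ⟨?_, h⟩⟩
  have := edge_props hα h
  exact ⟨this.1, this.2.1⟩

lemma F_rec (α : List ℕ) (hα : IsComposition α) :
    FU α = dualImmU α - ∑ β ∈ nbrs α, (LU α β : ℚ) • FU β := by
  classical
  have hmem : α ∈ (comps_finite α.sum).toFinset := by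
    rw [Set.Finite.mem_toFinset]
    exact ⟨hα, rfl⟩
  rw [dual_expand α hα, ← Finset.add_sum_erase _ _ hmem, LU_self α hα, Nat.cast_one, one_smul]
  have : ∑ β ∈ (comps_finite α.sum).toFinset.erase α, (LU α β : ℚ) • FU β =
      ∑ β ∈ nbrs α, (LU α β : ℚ) • FU β := by
    symm
    refine Finset.sum_subset ?_ ?_
    · intro β hβ
      have h := (mem_nbrs hα).1 hβ
      exact Finset.mem_erase.2 ⟨h.1, (Finset.mem_filter.1 hβ).1⟩
    · intro β hβ hn
      rw [mem_nbrs hα] at hn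
      have : LU α β = 0 := by
        by_contra h0
        exact hn ⟨(Finset.mem_erase.1 hβ).1, h0⟩
      simp [this]
  rw [this]
  simp

/-- All paths starting at `α`. -/
def PA (α : List ℕ) : Set (List (List ℕ)) := {p | p.head? = some α ∧ p.IsChain IsEdgeU}

lemma mem_PA (α : List ℕ) (p : List (List ℕ)) :
    p ∈ PA α ↔ p = [α] ∨ ∃ β, IsEdgeU α β ∧ ∃ q ∈ PA β, α :: q = p := by
  constructor
  · rintro ⟨h1, h2⟩
    cases p with
    | nil => simp at h1
    | cons a q =>
      simp only [List.head?_cons, Option.some.injEq] at h1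
      subst h1
      cases q with
      | nil => left; rfl
      | cons β q =>
        right
        rw [List.isChain_cons_cons] at h2
        exact ⟨β, h2.1, β :: q, ⟨rfl, h2.2⟩, rfl⟩
  · rintro (rfl | ⟨β, he, q, ⟨h1, h2⟩, rfl⟩)
    · exact ⟨rfl, by simp⟩
    · cases q with
      | nil => simp at h1
      | cons b q =>
        simp only [List.head?_cons, Option.some.injEq] at h1
        subst h1
        exact ⟨rfl, List.isChain_cons_cons.2 ⟨he, h2⟩⟩

lemma weight_cons (α β : List ℕ) (q : List (List ℕ)) (h : q.head? = some β) :
    pathWeightU (α :: q) = -((LU α β : ℚ) * pathWeightU q) := by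
  cases q with
  | nil => simp at h
  | cons b q =>
    simp only [List.head?_cons, Option.some.injEq] at h
    subst h
    simp [pathWeightU, pow_succ]
    ring

lemma main_exp (n : ℕ) : ∀ (k : ℕ) (α : List ℕ), IsComposition α → α.sum = n → n * n - wt α = k →
    ∃ P : Finset (List (List ℕ)), (∀ p, p ∈ P ↔ p ∈ PA α) ∧
      FU α = ∑ p ∈ P, pathWeightU p • dualImmU (p.getLastD []) := by
  classical
  intro k
  induction k using Nat.strong_induction_on with
  | _ k ih =>
    intro α hα hsum hk
    have hIH : ∀ β ∈ nbrs α, ∃ P : Finset (List (List ℕ)), (∀ p, p ∈ P ↔ p ∈ PA β) ∧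
        FU β = ∑ p ∈ P, pathWeightU p • dualImmU (p.getLastD []) := by
      intro β hβ
      obtain ⟨h1, h2, h3⟩ := edge_props hα ((mem_nbrs hα).1 hβ)
      have hb : wt β ≤ n * n := by
        refine (wt_bound β).trans ?_
        have := length_le_sum β h1
        rw [h2, hsum] at this ⊢
        exact Nat.mul_le_mul_right _ this
      exact ih (n * n - wt β) (by omega) β h1 (h2.trans hsum) rfl
    choose! P hP1 hP2 using hIH
    refine ⟨insert [α] ((nbrs α).biUnion (fun β => (P β).image (fun q => α :: q))), ?_, ?_⟩
    · intro p
      rw [mem_PA, Finset.mem_insert, Finset.mem_biUnion]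
      refine or_congr_right ?_
      constructor
      · rintro ⟨β, hβ, hp⟩
        obtain ⟨q, hq, rfl⟩ := Finset.mem_image.1 hp
        exact ⟨β, (mem_nbrs hα).1 hβ, q, (hP1 β hβ q).1 hq, rfl⟩
      · rintro ⟨β, he, q, hq, rfl⟩
        have hβ := (mem_nbrs hα).2 he
        exact ⟨β, hβ, Finset.mem_image.2 ⟨q, (hP1 β hβ q).2 hq, rfl⟩⟩
    · rw [Finset.sum_insert, Finset.sum_biUnion]
      · rw [F_rec α hα, sub_eq_add_neg, ← Finset.sum_neg_distrib]
        congr 1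
        · simp [pathWeightU]
        · refine Finset.sum_congr rfl fun β hβ => ?_
          rw [Finset.sum_image (by intro a _ b _ h; simpa using h), hP2 β hβ, Finset.smul_sum,
            ← Finset.sum_neg_distrib]
          refine Finset.sum_congr rfl fun q hq => ?_
          have hq' := (hP1 β hβ q).1 hq
          rw [weight_cons α β q hq'.1, smul_smul, neg_smul]
          cases q with
          | nil => simp [PA] at hq'
          | cons b q => simp
      · intro β hβ β' hβ' hne
        simp only [Function.onFun]
        rw [Finset.disjoint_left]
        intro p hp hp'
        obtain ⟨q, hq, rfl⟩ := Finset.mem_image.1 hp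
        obtain ⟨q', hq', h⟩ := Finset.mem_image.1 hp'
        simp only [List.cons.injEq, true_and] at h
        subst h
        have h1 := ((hP1 β hβ _).1 hq).1
        have h2 := ((hP1 β' hβ' _).1 hq').1
        rw [h1] at h2
        exact hne (by simpa using h2)
      · intro h
        obtain ⟨β, hβ, hp⟩ := Finset.mem_biUnion.1 h
        obtain ⟨q, hq, h⟩ := Finset.mem_image.1 hp
        simp only [List.cons.injEq, true_and] at h
        subst h
        have h1 := ((hP1 β hβ _).1 hq).1
        simp at h1

theorem final (α : List ℕ) (hα : IsComposition α) :
    FU α = ∑ᶠ β ∈ {β : List ℕ | (PathsU α β).Nonempty}, LinvU α β • dualImmU β := by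
  classical
  obtain ⟨P, hP, hF⟩ := main_exp α.sum _ α hα rfl rfl
  have hpath : ∀ β, PathsU α β = ((P.filter (fun p => p.getLastD [] = β) : Finset _) : Set _) := by
    intro β
    ext p
    rw [Finset.mem_coe, Finset.mem_filter, hP]
    constructor
    · rintro ⟨h1, h2, h3⟩
      refine ⟨⟨h1, h3⟩, ?_⟩
      rw [List.getLastD_eq_getLast?, h2]
      rfl
    · rintro ⟨⟨h1, h3⟩, h2⟩
      refine ⟨h1, ?_, h3⟩
      cases p with
      | nil => simp at h1
      | cons a p =>
        rw [List.getLastD_eq_getLast?, List.getLast?_eq_getLast_of_ne_nil (by simp)] at h2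
        rw [List.getLast?_eq_getLast_of_ne_nil (by simp)]
        simpa using h2
  have hset : {β : List ℕ | (PathsU α β).Nonempty} =
      ((P.image (fun p => p.getLastD []) : Finset _) : Set _) := by
    ext β
    rw [Set.mem_setOf_eq, hpath, Finset.coe_nonempty]
    simp [Finset.Nonempty]
  have hL : ∀ β, LinvU α β = ∑ p ∈ P.filter (fun p => p.getLastD [] = β), pathWeightU p := by
    intro β
    rw [LinvU, hpath, finsum_mem_coe_finset]
  rw [hset, finsum_mem_coe_finset, hF,
    ← Finset.sum_fiberwise_of_maps_to (fun p hp => Finset.mem_image_of_mem (fun p => p.getLastD []) hp)]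
  refine Finset.sum_congr rfl fun β _ => ?_
  rw [hL, Finset.sum_smul]
  refine Finset.sum_congr rfl fun p hp => ?_
  rw [(Finset.mem_filter.1 hp).2]

end Pf

end ColoredImm

namespace ColoredImm

open Uncolored in
/-- For a composition `α` of `n`, the fundamental quasisymmetric function
expands into the dual immaculate basis as `F_α = Σ_β L⁻¹_{α,β} 𝔖*_β`, summed over all
compositions `β` reachable from `α` in the immaculate descent graph `𝔇^n`, where
`L⁻¹_{α,β} = Σ_𝒫 (-1)^{ℓ(𝒫)} prod(𝒫)` over directed paths `𝒫` from `α` to `β`. -/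
theorem statement8 (α : List ℕ) (hα : IsComposition α) :
    FU α = ∑ᶠ β ∈ {β : List ℕ | (PathsU α β).Nonempty}, LinvU α β • dualImmU β := by
  exact Pf.final α hα

end ColoredImm
end
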